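/- arXiv:math/0308145 — 5 statements merged into one kernel-verified Lean document; each statement's English description precedes it below -/
import Mathlib

section
/- Let E_1, …, E_n, F be Banach spaces over K = ℝ or ℂ and 0 < p < ∞. A continuous n-linear map T : E_1 × ⋯ × E_n → F is p-semi-integral if and only if there exists a constant C ≥ 0 such that (∑_{j=1}^m ‖T(x_{1,j}, …, x_{n,j})‖^p)^{1/p} ≤ C ( sup { ∑_{j=1}^m |φ_1(x_{1,j}) ⋯ φ_n(x_{n,j})|^p : φ_l ∈ B_{E_l'}, l = 1, …, n } )^{1/p} for every m ∈ ℕ and all vectors x_{l,j} ∈ E_l (l = 1, …, n, j = 1, …, m). Moreover, the infimum of all such constants C equals ‖T‖_{si,p}. -/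
open MeasureTheory

/-- Weak `ℓ_q` norm of a finite family in a normed space. -/
noncomputable def weakLpNorm (𝕜 : Type*) [RCLike 𝕜] {E : Type*} [NormedAddCommGroup E]
    [NormedSpace 𝕜 E] (q : ℝ) {m : ℕ} (x : Fin m → E) : ℝ :=
  ⨆ φ : {φ : E →L[𝕜] 𝕜 // ‖φ‖ ≤ 1}, (∑ j, ‖φ.1 (x j)‖ ^ q) ^ (1 / q)

/-- `T` satisfies the `p`-semi-integral inequality with constant `C`, witnessed by a regular
Borel probability measure on the product of the closed dual unit balls with their
weak-star topologies. -/
def SemiIntegralWith (𝕜 : Type*) [RCLike 𝕜] {ι : Type*} [Fintype ι] {E : ι → Type*}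
    [∀ i, NormedAddCommGroup (E i)] [∀ i, NormedSpace 𝕜 (E i)]
    {F : Type*} [NormedAddCommGroup F]
    (p C : ℝ) (T : (∀ i, E i) → F) : Prop :=
  letI : MeasurableSpace (∀ i, {φ : WeakDual 𝕜 (E i) // ∀ z, ‖φ z‖ ≤ ‖z‖}) := borel _
  ∃ μ : Measure (∀ i, {φ : WeakDual 𝕜 (E i) // ∀ z, ‖φ z‖ ≤ ‖z‖}),
    IsProbabilityMeasure μ ∧ μ.Regular ∧
      ∀ x : ∀ i, E i,
        ‖T x‖ ≤ C * (∫ φ, ∏ i, ‖(φ i).1 (x i)‖ ^ p ∂μ) ^ (1 / p)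

/-- The `si,p` norm: infimum of admissible constants. -/
noncomputable def siNorm (𝕜 : Type*) [RCLike 𝕜] {ι : Type*} [Fintype ι] {E : ι → Type*}
    [∀ i, NormedAddCommGroup (E i)] [∀ i, NormedSpace 𝕜 (E i)]
    {F : Type*} [NormedAddCommGroup F]
    (p : ℝ) (T : (∀ i, E i) → F) : ℝ :=
  sInf {C : ℝ | 0 ≤ C ∧ SemiIntegralWith 𝕜 p C T}

/-- `T` is absolutely `(p; q₁,…,qₙ)`-summing with constant `C`. -/
def AbsSummingWith (𝕜 : Type*) [RCLike 𝕜] {ι : Type*} [Fintype ι] {E : ι → Type*}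
    [∀ i, NormedAddCommGroup (E i)] [∀ i, NormedSpace 𝕜 (E i)]
    {F : Type*} [NormedAddCommGroup F]
    (p : ℝ) (q : ι → ℝ) (C : ℝ) (T : (∀ i, E i) → F) : Prop :=
  ∀ (m : ℕ) (x : ∀ i, Fin m → E i),
    (∑ j, ‖T (fun i => x i j)‖ ^ p) ^ (1 / p) ≤ C * ∏ i, weakLpNorm 𝕜 (q i) (x i)

/-- `T` is `p`-dominated with constant `C`, witnessed by regular Borel probability measures
on the closed dual unit balls with their weak-star topologies. -/
def DominatedWith (𝕜 : Type*) [RCLike 𝕜] {ι : Type*} [Fintype ι] {E : ι → Type*}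
    [∀ i, NormedAddCommGroup (E i)] [∀ i, NormedSpace 𝕜 (E i)]
    {F : Type*} [NormedAddCommGroup F]
    (p C : ℝ) (T : (∀ i, E i) → F) : Prop :=
  letI : ∀ i, MeasurableSpace {φ : WeakDual 𝕜 (E i) // ∀ z, ‖φ z‖ ≤ ‖z‖} := fun i => borel _
  ∃ μ : ∀ i, Measure {φ : WeakDual 𝕜 (E i) // ∀ z, ‖φ z‖ ≤ ‖z‖},
    (∀ i, IsProbabilityMeasure (μ i)) ∧ (∀ i, (μ i).Regular) ∧
      ∀ x : ∀ i, E i,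
        ‖T x‖ ≤ C * ∏ i, (∫ φ, ‖φ.1 (x i)‖ ^ p ∂(μ i)) ^ (1 / p)

/-- `E` is an `𝓛_∞`-space. -/
def IsLinftySpace (𝕜 : Type*) [RCLike 𝕜] (E : Type*) [NormedAddCommGroup E]
    [NormedSpace 𝕜 E] : Prop :=
  ∃ lam : ℝ, 1 ≤ lam ∧ ∀ M : Submodule 𝕜 E, FiniteDimensional 𝕜 M →
    ∃ N : Submodule 𝕜 E, M ≤ N ∧ FiniteDimensional 𝕜 N ∧
      ∃ v : N ≃L[𝕜] (Fin (Module.finrank 𝕜 N) → 𝕜),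
        ‖(v : N →L[𝕜] (Fin (Module.finrank 𝕜 N) → 𝕜))‖ *
          ‖(v.symm : (Fin (Module.finrank 𝕜 N) → 𝕜) →L[𝕜] N)‖ ≤ lam

/-- `F` has cotype `q`. -/
def HasCotype (q : ℝ) (F : Type*) [NormedAddCommGroup F] : Prop :=
  ∃ C : ℝ, 0 ≤ C ∧ ∀ (m : ℕ) (x : Fin m → F),
    (∑ j, ‖x j‖ ^ q) ^ (1 / q) ≤
      C * ((∑ ε : Fin m → Bool, ‖∑ j, (if ε j then x j else -x j)‖ ^ (2 : ℝ)) / 2 ^ m)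
        ^ ((1 : ℝ) / 2)

/-- The finite-family sup-form inequality characterizing `p`-semi-integral maps. -/
def SemiIntegralSupIneq (𝕜 : Type*) [RCLike 𝕜] {ι : Type*} [Fintype ι] {E : ι → Type*}
    [∀ i, NormedAddCommGroup (E i)] [∀ i, NormedSpace 𝕜 (E i)]
    {F : Type*} [NormedAddCommGroup F]
    (p C : ℝ) (T : (∀ i, E i) → F) : Prop :=
  ∀ (m : ℕ) (x : ∀ i, Fin m → E i),
    (∑ j, ‖T (fun i => x i j)‖ ^ p) ^ (1 / p) ≤
      C * (⨆ φ : ∀ i, {ψ : WeakDual 𝕜 (E i) // ∀ z, ‖ψ z‖ ≤ ‖z‖},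
            ∑ j, ∏ i, ‖(φ i).1 (x i j)‖ ^ p) ^ (1 / p)

/-- Separation plus Riesz: a convex set of continuous functions containing `0`, none of which is
strictly negative everywhere, is nonnegative under some regular probability measure. -/
theorem aux_exists_measure {K : Type*} [TopologicalSpace K] [CompactSpace K] [T2Space K]
    [MeasurableSpace K] [BorelSpace K] (t : Set C(K, ℝ)) (ht : Convex ℝ t)
    (h0 : (0 : C(K, ℝ)) ∈ t) (hpos : ∀ g ∈ t, ∃ φ, 0 ≤ g φ) :
    ∃ μ : Measure K, IsProbabilityMeasure μ ∧ μ.Regular ∧ ∀ g ∈ t, 0 ≤ ∫ φ, g φ ∂μ := by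
  have hset : {g : C(K, ℝ) | ∀ φ, g φ < 0} = {g : C(K, ℝ) | Set.MapsTo g Set.univ (Set.Iio 0)} := by
    ext g; simp [Set.MapsTo]
  have hs₂ : IsOpen {g : C(K, ℝ) | ∀ φ, g φ < 0} := by
    rw [hset]
    exact ContinuousMap.isOpen_setOf_mapsTo isCompact_univ isOpen_Iio
  have hs₁ : Convex ℝ {g : C(K, ℝ) | ∀ φ, g φ < 0} := by
    intro g hg h hh a b ha hb hab φ
    exact (convex_Iio (0 : ℝ)) (hg φ) (hh φ) ha hb hab
  obtain ⟨L, u, hL, hu⟩ := geometric_hahn_banach_open hs₁ hs₂ ht (by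
    rw [Set.disjoint_left]
    intro g hg hgt
    obtain ⟨φ, hφ⟩ := hpos g hgt
    exact absurd (hg φ) (not_lt.mpr hφ))
  have hu0 : u ≤ 0 := by simpa using hu 0 h0
  have hneg : ∀ ε : ℝ, 0 < ε → ∀ g : C(K, ℝ), (∀ φ, 0 ≤ g φ) → 0 ≤ u + (L g + ε * L 1) := by
    intro ε hε g hg
    have := hL (-(g + ε • (1 : C(K, ℝ)))) (by
      intro φ
      have := hg φ
      simp
      linarith)
    simp at this
    linarith
  have hL1 : 0 < L 1 := by
    have := hL (-1) (by intro φ; simp)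
    simp at this
    linarith
  have hlim : ∀ a b : ℝ, (∀ ε : ℝ, 0 < ε → 0 ≤ a + ε * b) → 0 < b → 0 ≤ a := by
    intro a b h hb
    by_contra hc
    push Not at hc
    have := h (-a / (2 * b)) (by apply div_pos <;> linarith)
    have h2 : -a / (2 * b) * b = -a / 2 := by field_simp
    linarith
  have hu1 : 0 ≤ u := by
    refine hlim u (L 1) (fun ε hε => ?_) hL1
    simpa using hneg ε hε 0 (by simp)
  have hLpos : ∀ g : C(K, ℝ), (∀ φ, 0 ≤ g φ) → 0 ≤ L g := by
    intro g hg
    refine hlim (L g) (L 1) (fun ε hε => ?_) hL1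
    have := hneg ε hε g hg
    linarith
  let Λ : CompactlySupportedContinuousMap K ℝ →ₚ[ℝ] ℝ := PositiveLinearMap.mk₀
    { toFun := fun g => (L 1)⁻¹ * L g.toContinuousMap
      map_add' := fun g h => by
        have : (g + h).toContinuousMap = g.toContinuousMap + h.toContinuousMap := rfl
        rw [this, map_add, mul_add]
      map_smul' := fun c g => by
        have : (c • g).toContinuousMap = c • g.toContinuousMap := rfl
        rw [this, map_smul]
        simp only [smul_eq_mul, RingHom.id_apply]
        ring }
    (fun g hg => mul_nonneg (inv_nonneg.mpr hL1.le) (hLpos _ (fun φ => hg φ)))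
  have hint : ∀ g : C(K, ℝ), ∫ φ, g φ ∂(RealRMK.rieszMeasure Λ) = (L 1)⁻¹ * L g := fun g =>
    RealRMK.integral_rieszMeasure Λ (CompactlySupportedContinuousMap.continuousMapEquiv g)
  refine ⟨RealRMK.rieszMeasure Λ, ?_, inferInstance, ?_⟩
  · have := hint 1
    rw [inv_mul_cancel₀ hL1.ne'] at this
    simp at this
    constructor
    rw [measureReal_def] at this
    rwa [← ENNReal.toReal_eq_one_iff]
  · intro g hg
    rw [hint]
    exact mul_nonneg (inv_nonneg.mpr hL1.le) (hu1.trans (hu g hg))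

theorem aux_compact (𝕜 : Type*) [RCLike 𝕜] (E : Type*) [NormedAddCommGroup E] [NormedSpace 𝕜 E] :
    CompactSpace {φ : WeakDual 𝕜 E // ∀ z, ‖φ z‖ ≤ ‖z‖} := by
  have h := WeakDual.isCompact_closedBall (𝕜 := 𝕜) (E := E) 0 1
  have h2 : {φ : WeakDual 𝕜 E | ∀ z, ‖φ z‖ ≤ ‖z‖} =
      WeakDual.toStrongDual ⁻¹' Metric.closedBall (0 : StrongDual 𝕜 E) 1 := by
    ext φ
    simp only [Set.mem_setOf_eq, Set.mem_preimage, mem_closedBall_zero_iff]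
    rw [ContinuousLinearMap.opNorm_le_iff zero_le_one]
    simp
  rw [← h2] at h
  exact isCompact_iff_compactSpace.mp h

theorem aux_cont {𝕜 : Type*} [RCLike 𝕜] {ι : Type*} [Fintype ι] {E : ι → Type*}
    [∀ i, NormedAddCommGroup (E i)] [∀ i, NormedSpace 𝕜 (E i)] {p : ℝ} (hp : 0 < p)
    (x : ∀ i, E i) :
    Continuous (fun φ : ∀ i, {φ : WeakDual 𝕜 (E i) // ∀ z, ‖φ z‖ ≤ ‖z‖} =>
      ∏ i, ‖(φ i).1 (x i)‖ ^ p) := by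
  refine continuous_finset_prod _ fun i _ => ?_
  refine Continuous.rpow_const ?_ (fun _ => Or.inr hp.le)
  refine continuous_norm.comp ?_
  exact (WeakDual.eval_continuous (x i)).comp (continuous_subtype_val.comp (continuous_apply i))

theorem aux_forward {𝕜 : Type*} [RCLike 𝕜] {ι : Type*} [Fintype ι] {E : ι → Type*}
    [∀ i, NormedAddCommGroup (E i)] [∀ i, NormedSpace 𝕜 (E i)]
    {F : Type*} [NormedAddCommGroup F] {p C : ℝ} (hp : 0 < p) (hC : 0 ≤ C) (T : (∀ i, E i) → F)
    (h : SemiIntegralWith 𝕜 p C T) : SemiIntegralSupIneq 𝕜 p C T := by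
  letI : MeasurableSpace (∀ i, {φ : WeakDual 𝕜 (E i) // ∀ z, ‖φ z‖ ≤ ‖z‖}) := borel _
  haveI : BorelSpace (∀ i, {φ : WeakDual 𝕜 (E i) // ∀ z, ‖φ z‖ ≤ ‖z‖}) := ⟨rfl⟩
  haveI : ∀ i, CompactSpace {φ : WeakDual 𝕜 (E i) // ∀ z, ‖φ z‖ ≤ ‖z‖} :=
    fun i => aux_compact 𝕜 (E i)
  obtain ⟨μ, hμ, -, hT⟩ := h
  intro m x
  set S := ⨆ φ : ∀ i, {ψ : WeakDual 𝕜 (E i) // ∀ z, ‖ψ z‖ ≤ ‖z‖},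
            ∑ j, ∏ i, ‖(φ i).1 (x i j)‖ ^ p with hS
  have hcont : Continuous (fun φ : ∀ i, {ψ : WeakDual 𝕜 (E i) // ∀ z, ‖ψ z‖ ≤ ‖z‖} =>
      ∑ j, ∏ i, ‖(φ i).1 (x i j)‖ ^ p) :=
    continuous_finset_sum _ fun j _ => aux_cont hp (fun i => x i j)
  have hbdd := (isCompact_range hcont).bddAbove
  have hint : ∀ j, Integrable (fun φ : ∀ i, {ψ : WeakDual 𝕜 (E i) // ∀ z, ‖ψ z‖ ≤ ‖z‖} =>
      ∏ i, ‖(φ i).1 (x i j)‖ ^ p) μ := fun j =>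
    (aux_cont hp (fun i => x i j)).integrable_of_hasCompactSupport
      (HasCompactSupport.of_compactSpace _)
  have hI0 : ∀ y : ∀ i, E i, 0 ≤ ∫ φ : ∀ i, {ψ : WeakDual 𝕜 (E i) // ∀ z, ‖ψ z‖ ≤ ‖z‖},
      ∏ i, ‖(φ i).1 (y i)‖ ^ p ∂μ := fun y =>
    integral_nonneg fun φ => Finset.prod_nonneg fun i _ => by positivity
  have hS0 : 0 ≤ S := Real.iSup_nonneg fun φ =>
    Finset.sum_nonneg fun j _ => Finset.prod_nonneg fun i _ => by positivity
  have key : ∑ j, ‖T (fun i => x i j)‖ ^ p ≤ C ^ p * S := by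
    calc ∑ j, ‖T (fun i => x i j)‖ ^ p
        ≤ ∑ j, C ^ p * ∫ φ, ∏ i, ‖(φ i).1 (x i j)‖ ^ p ∂μ := by
          refine Finset.sum_le_sum fun j _ => ?_
          have h1 := Real.rpow_le_rpow (norm_nonneg _) (hT (fun i => x i j)) hp.le
          rwa [Real.mul_rpow hC (Real.rpow_nonneg (hI0 _) _), ← Real.rpow_mul (hI0 _),
            one_div, inv_mul_cancel₀ hp.ne', Real.rpow_one] at h1
      _ = C ^ p * ∫ φ, ∑ j, ∏ i, ‖(φ i).1 (x i j)‖ ^ p ∂μ := by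
          rw [← Finset.mul_sum, integral_finset_sum _ fun j _ => hint j]
      _ ≤ C ^ p * S := by
          refine mul_le_mul_of_nonneg_left ?_ (Real.rpow_nonneg hC _)
          calc ∫ φ, ∑ j, ∏ i, ‖(φ i).1 (x i j)‖ ^ p ∂μ ≤ ∫ φ, S ∂μ := by
                refine integral_mono (integrable_finset_sum _ fun j _ => hint j)
                  (integrable_const _) fun φ => le_ciSup hbdd φ
            _ = S := by simp
  have h1 := Real.rpow_le_rpow (Finset.sum_nonneg fun j _ => by positivity) key
    (one_div_nonneg.mpr hp.le)
  rwa [Real.mul_rpow (Real.rpow_nonneg hC _) hS0, ← Real.rpow_mul hC, mul_one_div,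
    div_self hp.ne', Real.rpow_one] at h1

theorem aux_backward {𝕜 : Type*} [RCLike 𝕜] {n : ℕ} (hn : 1 ≤ n)
    {E : Fin n → Type*} [∀ i, NormedAddCommGroup (E i)] [∀ i, NormedSpace 𝕜 (E i)]
    {F : Type*} [NormedAddCommGroup F] [NormedSpace 𝕜 F]
    {p C : ℝ} (hp : 0 < p) (hC : 0 ≤ C) (T : ContinuousMultilinearMap 𝕜 E F)
    (h : SemiIntegralSupIneq 𝕜 p C ⇑T) : SemiIntegralWith 𝕜 p C ⇑T := by
  letI : MeasurableSpace (∀ i, {φ : WeakDual 𝕜 (E i) // ∀ z, ‖φ z‖ ≤ ‖z‖}) := borel _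
  haveI : BorelSpace (∀ i, {φ : WeakDual 𝕜 (E i) // ∀ z, ‖φ z‖ ≤ ‖z‖}) := ⟨rfl⟩
  haveI : ∀ i, CompactSpace {φ : WeakDual 𝕜 (E i) // ∀ z, ‖φ z‖ ≤ ‖z‖} :=
    fun i => aux_compact 𝕜 (E i)
  haveI : ∀ i, Nonempty {φ : WeakDual 𝕜 (E i) // ∀ z, ‖φ z‖ ≤ ‖z‖} :=
    fun i => ⟨⟨0, fun z => by
      have : (0 : WeakDual 𝕜 (E i)) z = 0 := rfl
      rw [this]; simp⟩⟩
  let t : Set C(∀ i, {φ : WeakDual 𝕜 (E i) // ∀ z, ‖φ z‖ ≤ ‖z‖}, ℝ) :=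
    {g | ∃ (m : ℕ) (x : ∀ i, Fin m → E i), ∀ φ, g φ =
      ∑ j, (C ^ p * ∏ i, ‖(φ i).1 (x i j)‖ ^ p - ‖T (fun i => x i j)‖ ^ p)}
  have hscale : ∀ a : ℝ, 0 ≤ a → ∀ g ∈ t, a • g ∈ t := by
    rintro a ha g ⟨m, x, hg⟩
    let i₀ : Fin n := ⟨0, hn⟩
    let c : 𝕜 := ((a ^ (1 / p) : ℝ) : 𝕜)
    have hc : ‖c‖ ^ p = a := by
      simp only [c, RCLike.norm_ofReal]
      rw [abs_of_nonneg (Real.rpow_nonneg ha _), ← Real.rpow_mul ha, one_div,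
        inv_mul_cancel₀ hp.ne', Real.rpow_one]
    refine ⟨m, fun i j => (if i = i₀ then c else 1) • x i j, fun φ => ?_⟩
    rw [ContinuousMap.smul_apply, hg φ, smul_eq_mul, Finset.mul_sum]
    refine Finset.sum_congr rfl fun j _ => ?_
    rw [T.map_smul_univ, norm_smul, Real.mul_rpow (norm_nonneg _) (norm_nonneg _)]
    have h1 : ∀ i, ‖(φ i).1 ((if i = i₀ then c else 1) • x i j)‖ ^ p =
        ‖(if i = i₀ then c else 1)‖ ^ p * ‖(φ i).1 (x i j)‖ ^ p := fun i => by
      rw [map_smul, norm_smul, Real.mul_rpow (norm_nonneg _) (norm_nonneg _)]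
    have h2 : ∏ i : Fin n, ‖(if i = i₀ then c else 1)‖ ^ p = a := by
      rw [Finset.prod_eq_single i₀]
      · simp [hc]
      · intro i _ hi; simp [hi]
      · simp
    simp only [h1]
    rw [Finset.prod_mul_distrib, h2, Finset.prod_ite_eq' Finset.univ i₀ (fun _ => c)]
    simp only [Finset.mem_univ, if_true, hc]
    ring
  have hadd : ∀ g ∈ t, ∀ g' ∈ t, g + g' ∈ t := by
    rintro g ⟨m, x, hg⟩ g' ⟨m', x', hg'⟩
    refine ⟨m + m', fun i => Fin.append (x i) (x' i), fun φ => ?_⟩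
    rw [Fin.sum_univ_add, ContinuousMap.add_apply, hg, hg']
    simp only [Fin.append_left, Fin.append_right]
  obtain ⟨μ, hμ, hreg, hpos⟩ := aux_exists_measure t
    (fun g hg g' hg' a b ha hb _ => hadd _ (hscale a ha g hg) _ (hscale b hb g' hg'))
    ⟨0, fun _ => Fin.elim0, fun φ => by simp⟩ (by
      rintro g ⟨m, x, hg⟩
      have hcont : Continuous (fun φ : ∀ i, {ψ : WeakDual 𝕜 (E i) // ∀ z, ‖ψ z‖ ≤ ‖z‖} =>
          ∑ j, ∏ i, ‖(φ i).1 (x i j)‖ ^ p) :=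
        continuous_finset_sum _ fun j _ => aux_cont hp (fun i => x i j)
      obtain ⟨φ, -, hφ⟩ := isCompact_univ.exists_isMaxOn Set.univ_nonempty hcont.continuousOn
      refine ⟨φ, ?_⟩
      have hS0 : 0 ≤ ∑ j, ∏ i, ‖(φ i).1 (x i j)‖ ^ p :=
        Finset.sum_nonneg fun j _ => Finset.prod_nonneg fun i _ => by positivity
      have h1 := (h m x).trans (mul_le_mul_of_nonneg_left (Real.rpow_le_rpow
        (Real.iSup_nonneg fun φ =>
          Finset.sum_nonneg fun j _ => Finset.prod_nonneg fun i _ => by positivity)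
        (ciSup_le fun ψ => hφ (Set.mem_univ ψ)) (one_div_nonneg.mpr hp.le)) hC)
      have hT0 : 0 ≤ ∑ j, ‖T (fun i => x i j)‖ ^ p := Finset.sum_nonneg fun j _ => by positivity
      have h2 := Real.rpow_le_rpow (Real.rpow_nonneg hT0 _) h1 hp.le
      rw [Real.mul_rpow hC (Real.rpow_nonneg hS0 _), ← Real.rpow_mul hS0, ← Real.rpow_mul hT0,
        one_div, inv_mul_cancel₀ hp.ne', Real.rpow_one, Real.rpow_one] at h2
      rw [hg, Finset.sum_sub_distrib, ← Finset.mul_sum]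
      linarith)
  refine ⟨μ, hμ, hreg, fun x => ?_⟩
  have hI0 : 0 ≤ ∫ φ : ∀ i, {ψ : WeakDual 𝕜 (E i) // ∀ z, ‖ψ z‖ ≤ ‖z‖},
      ∏ i, ‖(φ i).1 (x i)‖ ^ p ∂μ :=
    integral_nonneg fun φ => Finset.prod_nonneg fun i _ => by positivity
  have h1 := hpos ⟨fun φ => C ^ p * ∏ i, ‖(φ i).1 (x i)‖ ^ p - ‖T x‖ ^ p,
    ((aux_cont hp x).const_mul _).sub continuous_const⟩ ⟨1, fun i _ => x i, fun φ => by simp⟩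
  have hint : Integrable (fun φ : ∀ i, {ψ : WeakDual 𝕜 (E i) // ∀ z, ‖ψ z‖ ≤ ‖z‖} =>
      ∏ i, ‖(φ i).1 (x i)‖ ^ p) μ :=
    (aux_cont hp x).integrable_of_hasCompactSupport (HasCompactSupport.of_compactSpace _)
  simp only [ContinuousMap.coe_mk] at h1
  rw [integral_sub (hint.const_mul _) (integrable_const _), integral_const_mul] at h1
  simp only [integral_const, probReal_univ, one_smul, sub_nonneg] at h1
  have h2 := Real.rpow_le_rpow (by positivity) h1 (one_div_nonneg.mpr hp.le)
  rwa [Real.mul_rpow (Real.rpow_nonneg hC _) hI0, ← Real.rpow_mul hC, mul_one_div,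
    div_self hp.ne', Real.rpow_one, ← Real.rpow_mul (norm_nonneg _), mul_one_div,
    div_self hp.ne', Real.rpow_one] at h2


/-- A continuous `n`-linear map between Banach spaces is `p`-semi-integral
if and only if it satisfies the finite-family sup-form inequality for some constant `C ≥ 0`;
moreover the infimum of such constants equals the semi-integral norm `‖T‖_{si,p}`. -/
theorem semiIntegral_iff_supIneq {𝕜 : Type*} [RCLike 𝕜] {n : ℕ} (hn : 1 ≤ n)
    {E : Fin n → Type*} [∀ i, NormedAddCommGroup (E i)] [∀ i, NormedSpace 𝕜 (E i)]
    [∀ i, CompleteSpace (E i)]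
    {F : Type*} [NormedAddCommGroup F] [NormedSpace 𝕜 F] [CompleteSpace F]
    {p : ℝ} (hp : 0 < p) (T : ContinuousMultilinearMap 𝕜 E F) :
    ((∃ C, 0 ≤ C ∧ SemiIntegralWith 𝕜 p C ⇑T) ↔
      ∃ C, 0 ≤ C ∧ SemiIntegralSupIneq 𝕜 p C ⇑T) ∧
    sInf {C : ℝ | 0 ≤ C ∧ SemiIntegralSupIneq 𝕜 p C ⇑T} = siNorm 𝕜 p ⇑T := by
  have key : ∀ C, (0 ≤ C ∧ SemiIntegralWith 𝕜 p C ⇑T) ↔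
      (0 ≤ C ∧ SemiIntegralSupIneq 𝕜 p C ⇑T) := fun C =>
    and_congr_right fun hC => ⟨aux_forward hp hC _, aux_backward hn hp hC T⟩
  refine ⟨exists_congr key, ?_⟩
  unfold siNorm
  simp only [key]
end

section
/- Let E_1, …, E_n, F be Banach spaces, 0 < p < ∞, and let T : E_1 × ⋯ × E_n → F be a p-semi-integral continuous n-linear map. Then for each i ∈ {1, …, n}, the linear operator Ψ_i^{(n)}(T) : E_i → L(E_1, [i], …, E_n; F) is absolutely p-summing, and for every x ∈ E_i the continuous (n−1)-linear map Ψ_i^{(n)}(T)(x) is p-semi-integral. -/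
open MeasureTheory

/-- Insert the value `x` in coordinate `i`, using `y` in the remaining coordinates. -/
def insertCoord {n : ℕ} (E : Fin n → Type*) (i : Fin n) (x : E i)
    (y : ∀ j : {j : Fin n // j ≠ i}, E j.1) (j : Fin n) : E j :=
  if h : j = i then cast (congrArg E h).symm x else y ⟨j, h⟩

abbrev DBall (𝕜 : Type*) [RCLike 𝕜] (E : Type*) [NormedAddCommGroup E] [NormedSpace 𝕜 E] :=
  {φ : WeakDual 𝕜 E // ∀ z, ‖φ z‖ ≤ ‖z‖}

lemma DBall.compact (𝕜 : Type*) [RCLike 𝕜] (E : Type*) [NormedAddCommGroup E]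
    [NormedSpace 𝕜 E] : CompactSpace (DBall 𝕜 E) := by
  refine (isCompact_iff_compactSpace (s := {φ : WeakDual 𝕜 E | ∀ z, ‖φ z‖ ≤ ‖z‖})).mp ?_
  have h := WeakDual.isCompact_closedBall (𝕜 := 𝕜) (E := E) 0 1
  have he : {φ : WeakDual 𝕜 E | ∀ z, ‖φ z‖ ≤ ‖z‖} =
      WeakDual.toStrongDual ⁻¹' Metric.closedBall 0 1 := by
    ext φ
    simp only [Set.mem_setOf_eq, Set.mem_preimage, Metric.mem_closedBall, dist_zero_right]
    rw [ContinuousLinearMap.opNorm_le_iff zero_le_one]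
    simp only [one_mul]
    rfl
  rw [he]
  exact h

lemma DBall.cont {𝕜 : Type*} [RCLike 𝕜] {ι : Type*} {E : ι → Type*}
    [∀ i, NormedAddCommGroup (E i)] [∀ i, NormedSpace 𝕜 (E i)] {p : ℝ} (hp : 0 < p)
    (i : ι) (x : E i) :
    Continuous (fun φ : ∀ i, DBall 𝕜 (E i) => ‖(φ i).1 x‖ ^ p) := by
  refine Continuous.rpow_const ?_ (fun _ => Or.inr hp.le)
  exact ((WeakDual.eval_continuous x).comp
    (continuous_subtype_val.comp (continuous_apply i))).norm

lemma integrable_of_cont {K : Type*} [TopologicalSpace K] [CompactSpace K] [MeasurableSpace K]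
    [BorelSpace K] (μ : Measure K) [IsFiniteMeasure μ] {f : K → ℝ} (hf : Continuous f) :
    Integrable f μ := by
  rw [← integrableOn_univ]
  exact hf.continuousOn.integrableOn_compact' isCompact_univ MeasurableSet.univ

lemma regular_map {K L : Type*} [TopologicalSpace K] [CompactSpace K] [T2Space K]
    [MeasurableSpace K] [BorelSpace K] [TopologicalSpace L] [CompactSpace L] [T2Space L]
    [MeasurableSpace L] [BorelSpace L] (μ : Measure K) [IsFiniteMeasure μ] [μ.Regular]
    {f : K → L} (hf : Continuous f) : (μ.map f).Regular := by
  have : (μ.map f).InnerRegular := Measure.InnerRegular.map_of_continuous hf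
  infer_instance

lemma insertCoord_self {n : ℕ} (E : Fin n → Type*) (i : Fin n) (x : E i)
    (y : ∀ j : {j : Fin n // j ≠ i}, E j.1) : insertCoord E i x y i = x := by
  simp [insertCoord]

lemma insertCoord_ne {n : ℕ} (E : Fin n → Type*) (i : Fin n) (x : E i)
    (y : ∀ j : {j : Fin n // j ≠ i}, E j.1) (k : {j : Fin n // j ≠ i}) :
    insertCoord E i x y k.1 = y k := by
  simp [insertCoord, k.2]

/-- If `T` is `p`-semi-integral, then for each coordinate `i` the canonical
linear operator `Ψᵢ(T) : Eᵢ → L(E₁,[i],…,Eₙ;F)` is absolutely `p`-summing (the norm of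
`Ψᵢ(T)(x)` being the sup over the product of the closed unit balls of the remaining
coordinates), and `Ψᵢ(T)(x)` is `p`-semi-integral for every `x ∈ Eᵢ`. -/
theorem semiIntegral_psi {𝕜 : Type*} [RCLike 𝕜] {n : ℕ} (hn : 1 ≤ n)
    {E : Fin n → Type*} [∀ i, NormedAddCommGroup (E i)] [∀ i, NormedSpace 𝕜 (E i)]
    [∀ i, CompleteSpace (E i)]
    {F : Type*} [NormedAddCommGroup F] [NormedSpace 𝕜 F] [CompleteSpace F]
    {p : ℝ} (hp : 0 < p) (T : ContinuousMultilinearMap 𝕜 E F)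
    (hT : ∃ C, 0 ≤ C ∧ SemiIntegralWith 𝕜 p C ⇑T) (i : Fin n) :
    (∃ C, 0 ≤ C ∧ ∀ (m : ℕ) (x : Fin m → E i),
      (∑ j, (⨆ y : ∀ k : {k : Fin n // k ≠ i}, {z : E k.1 // ‖z‖ ≤ 1},
          ‖T (insertCoord E i (x j) (fun k => (y k).1))‖) ^ p) ^ (1 / p)
        ≤ C * weakLpNorm 𝕜 p x) ∧
    ∀ x : E i, ∃ C, 0 ≤ C ∧
      SemiIntegralWith 𝕜 p C (fun y : ∀ j : {j : Fin n // j ≠ i}, E j.1 =>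
        T (insertCoord E i x y)) := by
  classical
  obtain ⟨C, hC, μ, hμ, hreg, hle⟩ := hT
  letI : MeasurableSpace (∀ i, DBall 𝕜 (E i)) := borel _
  haveI : BorelSpace (∀ i, DBall 𝕜 (E i)) := ⟨rfl⟩
  haveI : ∀ i, CompactSpace (DBall 𝕜 (E i)) := fun i => DBall.compact 𝕜 (E i)
  have key : ∀ (x : E i) (y : ∀ j : {j : Fin n // j ≠ i}, E j.1),
      ‖T (insertCoord E i x y)‖ ≤ C * (∫ φ : (∀ i, DBall 𝕜 (E i)), ‖(φ i).1 x‖ ^ p *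
        ∏ k : {j : Fin n // j ≠ i}, ‖(φ k.1).1 (y k)‖ ^ p ∂μ) ^ (1 / p) := by
    intro x y
    refine (hle _).trans_eq ?_
    congr 3
    ext φ
    rw [Fintype.prod_eq_mul_prod_subtype_ne _ i, insertCoord_self]
    simp only [insertCoord_ne]
  have hcp : ∀ y : ∀ j : {j : Fin n // j ≠ i}, E j.1, Continuous
      (fun φ : ∀ i, DBall 𝕜 (E i) => ∏ k : {j : Fin n // j ≠ i}, ‖(φ k.1).1 (y k)‖ ^ p) :=
    fun y => continuous_finsetProd _ (fun k _ => DBall.cont hp k.1 (y k))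
  have hp' : (0:ℝ) ≤ 1 / p := by positivity
  refine ⟨⟨C, hC, fun m x => ?_⟩, fun x => ⟨C * ‖x‖, by positivity, ?_⟩⟩
  · have hbdd : BddAbove (Set.range (fun φ : {φ : E i →L[𝕜] 𝕜 // ‖φ‖ ≤ 1} =>
        (∑ j, ‖φ.1 (x j)‖ ^ p) ^ (1 / p))) := by
      refine ⟨(∑ j, ‖x j‖ ^ p) ^ (1 / p), ?_⟩
      rintro _ ⟨φ, rfl⟩
      dsimp only
      gcongr with j
      exact φ.1.le_of_opNorm_le φ.2 (x j) |>.trans_eq (one_mul _)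
    have hw0 : 0 ≤ weakLpNorm 𝕜 p x := Real.iSup_nonneg fun φ => by positivity
    have hw : ∀ φ : DBall 𝕜 (E i), ∑ j, ‖φ.1 (x j)‖ ^ p ≤ weakLpNorm 𝕜 p x ^ p := by
      intro φ
      have hφ : ‖(WeakDual.toStrongDual φ.1 : E i →L[𝕜] 𝕜)‖ ≤ 1 :=
        ContinuousLinearMap.opNorm_le_bound _ zero_le_one
          (fun z => (φ.2 z).trans_eq (one_mul _).symm)
      have h := le_ciSup hbdd ⟨_, hφ⟩
      have h2 : (∑ j, ‖φ.1 (x j)‖ ^ p) ^ (1 / p) ≤ weakLpNorm 𝕜 p x := h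
      rwa [one_div, Real.rpow_inv_le_iff_of_pos (by positivity) hw0 hp] at h2
    have hint : ∀ z : E i, Integrable (fun φ : ∀ i, DBall 𝕜 (E i) => ‖(φ i).1 z‖ ^ p) μ :=
      fun z => integrable_of_cont μ (DBall.cont hp i z)
    have hsup : ∀ j, (⨆ y : ∀ k : {k : Fin n // k ≠ i}, {z : E k.1 // ‖z‖ ≤ 1},
          ‖T (insertCoord E i (x j) (fun k => (y k).1))‖) ^ p ≤
          C ^ p * ∫ φ : (∀ i, DBall 𝕜 (E i)), ‖(φ i).1 (x j)‖ ^ p ∂μ := by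
      intro j
      have hI : 0 ≤ ∫ φ : (∀ i, DBall 𝕜 (E i)), ‖(φ i).1 (x j)‖ ^ p ∂μ :=
        integral_nonneg fun φ => by positivity
      have h1 : (⨆ y : ∀ k : {k : Fin n // k ≠ i}, {z : E k.1 // ‖z‖ ≤ 1},
          ‖T (insertCoord E i (x j) (fun k => (y k).1))‖) ≤
          C * (∫ φ : (∀ i, DBall 𝕜 (E i)), ‖(φ i).1 (x j)‖ ^ p ∂μ) ^ (1 / p) := by
        refine Real.iSup_le (fun y => (key _ _).trans ?_) (by positivity)
        refine mul_le_mul_of_nonneg_left (Real.rpow_le_rpow (integral_nonneg fun φ => by positivity)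
          (integral_mono (integrable_of_cont μ ((DBall.cont hp i (x j)).mul (hcp _))) (hint _) ?_)
          hp') hC
        intro φ
        refine mul_le_of_le_one_right (by positivity) ?_
        refine Finset.prod_le_one (fun k _ => by positivity) (fun k _ => ?_)
        exact Real.rpow_le_one (norm_nonneg _) (((φ k.1).2 _).trans (y k).2) hp.le
      refine (Real.rpow_le_rpow (Real.iSup_nonneg fun y => norm_nonneg _) h1 hp.le).trans_eq ?_
      rw [Real.mul_rpow hC (by positivity), ← Real.rpow_mul hI, one_div_mul_cancel hp.ne',
        Real.rpow_one]
    rw [one_div, Real.rpow_inv_le_iff_of_pos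
      (Finset.sum_nonneg fun j _ => Real.rpow_nonneg (Real.iSup_nonneg fun y => norm_nonneg _) _)
      (by positivity) hp, Real.mul_rpow hC hw0]
    refine (Finset.sum_le_sum fun j _ => hsup j).trans ?_
    rw [← Finset.mul_sum, ← integral_finsetSum _ (fun j _ => hint (x j))]
    refine mul_le_mul_of_nonneg_left ?_ (by positivity)
    refine (integral_mono (integrable_finsetSum _ (fun j _ => hint (x j)))
      (integrable_const (weakLpNorm 𝕜 p x ^ p)) (fun φ => hw (φ i))).trans_eq ?_
    simp
  · letI : MeasurableSpace (∀ k : {j : Fin n // j ≠ i}, DBall 𝕜 (E k.1)) := borel _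
    haveI : BorelSpace (∀ k : {j : Fin n // j ≠ i}, DBall 𝕜 (E k.1)) := ⟨rfl⟩
    let π : (∀ i, DBall 𝕜 (E i)) → (∀ k : {j : Fin n // j ≠ i}, DBall 𝕜 (E k.1)) :=
      fun φ k => φ k.1
    have hπ : Continuous π := continuous_pi fun k => continuous_apply k.1
    refine ⟨μ.map π, Measure.isProbabilityMeasure_map hπ.measurable.aemeasurable,
      regular_map μ hπ, fun y => ?_⟩
    have hc : Continuous (fun φ : ∀ k : {j : Fin n // j ≠ i}, DBall 𝕜 (E k.1) =>
        ∏ k, ‖(φ k).1 (y k)‖ ^ p) :=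
      continuous_finsetProd _ (fun k _ =>
        DBall.cont (E := fun k : {j : Fin n // j ≠ i} => E k.1) hp k (y k))
    have hmap : ∫ φ, ∏ k, ‖(φ k).1 (y k)‖ ^ p ∂(μ.map π) =
        ∫ φ : (∀ i, DBall 𝕜 (E i)), ∏ k : {j : Fin n // j ≠ i}, ‖(φ k.1).1 (y k)‖ ^ p ∂μ :=
      integral_map hπ.measurable.aemeasurable hc.measurable.aestronglyMeasurable
    have hI : 0 ≤ ∫ φ : (∀ i, DBall 𝕜 (E i)),
        ∏ k : {j : Fin n // j ≠ i}, ‖(φ k.1).1 (y k)‖ ^ p ∂μ :=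
      integral_nonneg fun φ => by positivity
    refine (key x y).trans ?_
    refine le_of_le_of_eq ?_ (congrArg (fun t : ℝ => C * ‖x‖ * t ^ (1 / p)) hmap.symm)
    rw [mul_assoc]
    refine mul_le_mul_of_nonneg_left ?_ hC
    have hx : ‖x‖ = (‖x‖ ^ p) ^ (1 / p) := by
      rw [← Real.rpow_mul (norm_nonneg _), mul_one_div_cancel hp.ne', Real.rpow_one]
    rw [hx, ← Real.mul_rpow (by positivity) hI, ← integral_const_mul]
    refine Real.rpow_le_rpow (integral_nonneg fun φ => by positivity) ?_ hp'
    refine integral_mono (integrable_of_cont μ ((DBall.cont hp i x).mul (hcp _)))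
      ((integrable_of_cont μ (hcp y)).const_mul _) (fun φ => ?_)
    refine mul_le_mul_of_nonneg_right ?_ (by positivity)
    exact Real.rpow_le_rpow (norm_nonneg _) ((φ i).2 x) hp.le
end

section
/- Let E_1, …, E_n, F be Banach spaces, n = r + s with r, s ≥ 1, and q_1, …, q_s ∈ [1, ∞). Let A : E_1 × ⋯ × E_n → F be a continuous n-linear map and suppose there exists K > 0 such that for all x_1 ∈ E_1, …, x_r ∈ E_r, the continuous s-linear map A_{x_1⋯x_r}(x_{r+1}, …, x_n) := A(x_1, …, x_n) is absolutely (1; q_1, …, q_s)-summing with ‖A_{x_1⋯x_r}‖_{as(1;q_1,…,q_s)} ≤ K ‖A‖ ‖x_1‖ ⋯ ‖x_r‖. Then A is absolutely (1; 1, …, 1, q_1, …, q_s)-summing (with r entries equal to 1), and ‖A‖_{as(1;1,…,1,q_1,…,q_s)} ≤ K ‖A‖. -/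
open MeasureTheory

/-- The sign attached to a Boolean. -/
def boolSign (𝕜 : Type*) [RCLike 𝕜] (b : Bool) : 𝕜 := if b then 1 else -1

lemma norm_boolSign (𝕜 : Type*) [RCLike 𝕜] (b : Bool) : ‖boolSign 𝕜 b‖ = 1 := by
  cases b <;> simp [boolSign]

lemma boolSign_orth (𝕜 : Type*) [RCLike 𝕜] {m : ℕ} (j k : Fin m) :
    ∑ ε : Fin m → Bool, boolSign 𝕜 (ε j) * boolSign 𝕜 (ε k) = if k = j then (2 : 𝕜) ^ m else 0 := by
  split_ifs with h
  · subst h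
    have : ∀ b : Bool, boolSign 𝕜 b * boolSign 𝕜 b = 1 := by
      intro b; cases b <;> simp [boolSign]
    simp [this]
  · refine Finset.sum_involution (fun ε _ => Function.update ε j (!(ε j))) ?_ ?_ ?_ ?_
    · intro ε _
      rw [Function.update_self, Function.update_of_ne h]
      cases ε j <;> cases ε k <;> simp [boolSign]
    · intro ε _ _ he
      have := congrFun he j
      simp at this
    · intro ε _; simp
    · intro ε _; simp

/-- Averaging over signs recovers the `j`-th vector. -/
lemma sign_average (𝕜 : Type*) [RCLike 𝕜] {E : Type*} [NormedAddCommGroup E]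
    [NormedSpace 𝕜 E] {m : ℕ} (x : Fin m → E) (j : Fin m) :
    x j = ∑ ε : Fin m → Bool, (((2 : 𝕜) ^ m)⁻¹ * boolSign 𝕜 (ε j)) •
      ∑ k, boolSign 𝕜 (ε k) • x k := by
  simp_rw [Finset.smul_sum, smul_smul]
  rw [Finset.sum_comm]
  simp_rw [← Finset.sum_smul, mul_assoc, ← Finset.mul_sum, boolSign_orth]
  simp

lemma weakLpNorm_nonneg (𝕜 : Type*) [RCLike 𝕜] {E : Type*} [NormedAddCommGroup E]
    [NormedSpace 𝕜 E] (q : ℝ) {m : ℕ} (x : Fin m → E) : 0 ≤ weakLpNorm 𝕜 q x :=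
  Real.iSup_nonneg fun φ => by positivity

lemma norm_sign_sum_le (𝕜 : Type*) [RCLike 𝕜] {E : Type*} [NormedAddCommGroup E]
    [NormedSpace 𝕜 E] {m : ℕ} (x : Fin m → E) (ε : Fin m → Bool) :
    ‖∑ k, boolSign 𝕜 (ε k) • x k‖ ≤ weakLpNorm 𝕜 1 x := by
  obtain ⟨φ, hφ, hz⟩ := exists_dual_vector'' 𝕜 (∑ k, boolSign 𝕜 (ε k) • x k)
  have h1 : ‖∑ k, boolSign 𝕜 (ε k) • x k‖ ≤ ∑ k, ‖φ (x k)‖ := by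
    have h2 : ‖∑ k, boolSign 𝕜 (ε k) • x k‖ = ‖φ (∑ k, boolSign 𝕜 (ε k) • x k)‖ := by
      rw [hz]; simp
    rw [h2, map_sum]
    refine (norm_sum_le _ _).trans (le_of_eq ?_)
    simp [norm_boolSign]
  refine h1.trans ?_
  have hb : BddAbove (Set.range fun φ : {φ : E →L[𝕜] 𝕜 // ‖φ‖ ≤ 1} =>
      (∑ j, ‖φ.1 (x j)‖ ^ (1 : ℝ)) ^ (1 / (1 : ℝ))) := by
    refine ⟨∑ j, ‖x j‖, ?_⟩
    rintro _ ⟨ψ, rfl⟩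
    simp only [Real.rpow_one, div_one]
    exact Finset.sum_le_sum fun j _ => by
      simpa using ψ.1.le_of_opNorm_le ψ.2 (x j)
  have := le_ciSup hb ⟨φ, hφ⟩
  simpa [weakLpNorm] using this

/-- If for all fixed `x₁,…,x_r` the `s`-linear map
`A_{x₁⋯x_r}(x_{r+1},…,x_n) = A(x₁,…,x_n)` is absolutely `(1; q₁,…,q_s)`-summing with
`‖A_{x₁⋯x_r}‖_{as} ≤ K ‖A‖ ‖x₁‖ ⋯ ‖x_r‖`, then `A` is absolutely
`(1; 1,…,1, q₁,…,q_s)`-summing with `‖A‖_{as} ≤ K ‖A‖`. -/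
theorem absSumming_of_fixed_coordinates {𝕜 : Type*} [RCLike 𝕜] {r s : ℕ}
    (hr : 1 ≤ r) (hs : 1 ≤ s)
    {E : Fin r ⊕ Fin s → Type*}
    [∀ i, NormedAddCommGroup (E i)] [∀ i, NormedSpace 𝕜 (E i)] [∀ i, CompleteSpace (E i)]
    {F : Type*} [NormedAddCommGroup F] [NormedSpace 𝕜 F] [CompleteSpace F]
    {q : Fin s → ℝ} (hq : ∀ j, 1 ≤ q j)
    (A : ContinuousMultilinearMap 𝕜 E F) {K : ℝ} (hK : 0 < K)
    (hA : ∀ x : ∀ i : Fin r, E (Sum.inl i),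
      AbsSummingWith 𝕜 1 q ((K * ‖A‖) * ∏ i, ‖x i‖)
        (fun y : ∀ j : Fin s, E (Sum.inr j) =>
          A (Sum.rec (motive := fun i => E i) x y))) :
    AbsSummingWith 𝕜 1 (Sum.elim (fun _ => 1) q) (K * ‖A‖) ⇑A := by
  intro m x
  set Ω := Fin m → Bool with hΩ
  let z : ∀ i : Fin r, Ω → E (Sum.inl i) := fun i ε => ∑ k, boolSign 𝕜 (ε k) • x (Sum.inl i) k
  let y : Fin m → ∀ i : Fin s, E (Sum.inr i) := fun j i => x (Sum.inr i) j
  let G : (Fin r → Ω) → Fin m → F := fun ε j =>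
    A (Sum.rec (motive := fun i => E i) (fun i => z i (ε i)) (y j))
  have key : ∀ j, ‖A (fun i => x i j)‖ ≤ ∑ ε : Fin r → Ω, (((2 : ℝ) ^ m)⁻¹) ^ r * ‖G ε j‖ := by
    intro j
    have e1 : A (fun i => x i j)
        = A.toMultilinearMap.currySum (fun i => x (Sum.inl i) j) (y j) := by
      rw [MultilinearMap.currySum_apply]
      change A _ = A _
      congr 1
      funext i
      cases i <;> rfl
    have e2 : (fun i : Fin r => x (Sum.inl i) j) =
        fun i => ∑ ε : Ω, (((2 : 𝕜) ^ m)⁻¹ * boolSign 𝕜 (ε j)) • z i ε := by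
      funext i
      exact sign_average 𝕜 (x (Sum.inl i)) j
    rw [e1, e2, MultilinearMap.map_sum, MultilinearMap.sum_apply]
    refine (norm_sum_le _ _).trans (Finset.sum_le_sum fun ε _ => ?_)
    rw [MultilinearMap.map_smul_univ (A.toMultilinearMap.currySum)
      (fun i => ((2 : 𝕜) ^ m)⁻¹ * boolSign 𝕜 (ε i j)) (fun i => z i (ε i)),
      MultilinearMap.smul_apply, norm_smul, norm_prod]
    simp only [norm_mul, norm_boolSign, norm_inv, norm_pow, RCLike.norm_ofNat, mul_one,
      Finset.prod_const, Finset.card_univ, Fintype.card_fin]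
    exact le_rfl
  have hKA : 0 ≤ K * ‖A‖ := by positivity
  have hW : 0 ≤ ∏ i, weakLpNorm 𝕜 (q i) (x (Sum.inr i)) :=
    Finset.prod_nonneg fun i _ => weakLpNorm_nonneg _ _ _
  have hG : ∀ ε : Fin r → Ω, ∑ j, ‖G ε j‖ ≤
      (K * ‖A‖) * ((∏ i, weakLpNorm 𝕜 1 (x (Sum.inl i))) *
        ∏ i, weakLpNorm 𝕜 (q i) (x (Sum.inr i))) := by
    intro ε
    have h := hA (fun i => z i (ε i)) m (fun i => x (Sum.inr i))
    simp only [Real.rpow_one, div_one] at h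
    refine h.trans ?_
    rw [← mul_assoc]
    refine mul_le_mul_of_nonneg_right (mul_le_mul_of_nonneg_left ?_ hKA) hW
    exact Finset.prod_le_prod (fun i _ => norm_nonneg _) fun i _ => norm_sign_sum_le 𝕜 _ _
  simp only [Real.rpow_one, div_one, Fintype.prod_sum_type, Sum.elim_inl, Sum.elim_inr]
  refine (Finset.sum_le_sum fun j _ => key j).trans ?_
  rw [Finset.sum_comm]
  simp_rw [← Finset.mul_sum]
  refine (mul_le_mul_of_nonneg_left (Finset.sum_le_sum fun ε _ => hG ε) (by positivity)).trans
    (le_of_eq ?_)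
  rw [Finset.sum_const, Finset.card_univ, nsmul_eq_mul]
  have hc : (Fintype.card (Fin r → Ω) : ℝ) = ((2 : ℝ) ^ m) ^ r := by
    simp [hΩ]
  rw [hc, ← mul_assoc, ← mul_pow, inv_mul_cancel₀ (by positivity), one_pow, one_mul]
end

section
/- Let F be a Banach space with cotype q (2 ≤ q < ∞) and let E_1, …, E_s be 𝓛_∞-spaces (1 ≤ s ≤ n). Then, regardless of the Banach spaces E_{s+1}, …, E_n, every continuous n-linear map from E_1 × ⋯ × E_n into F is absolutely (q; q_1, …, q_n)-summing, where q_1 = ⋯ = q_s = 2 and q_{s+1} = ⋯ = q_n = 1. -/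
open MeasureTheory

theorem aux_young {a b q : ℝ} (ha : 0 ≤ a) (hb : 0 ≤ b) (hq : 1 < q) :
    q * (b ^ (q - 1) * a) ≤ (q - 1) * b ^ q + a ^ q := by
  have h := Real.young_inequality_of_nonneg ha (Real.rpow_nonneg hb (q - 1))
    (Real.HolderConjugate.conjExponent hq)
  have hq0 : (0 : ℝ) < q := by linarith
  have hq1 : (q - 1) ≠ 0 := by linarith
  rw [← Real.rpow_mul hb, Real.conjExponent, mul_div_cancel₀ _ hq1] at h
  have h2 := mul_le_mul_of_nonneg_left h hq0.le
  calc q * (b ^ (q - 1) * a) = q * (a * b ^ (q - 1)) := by ring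
    _ ≤ _ := h2
    _ = _ := by field_simp; ring

theorem aux_tangent {a b c q : ℝ} (ha : 0 ≤ a) (hb : 0 ≤ b) (hq : 1 < q) (h : b - c ≤ a) :
    b ^ q - q * (b ^ (q - 1) * c) ≤ a ^ q := by
  have h1 := aux_young ha hb hq
  have h2 : b ^ (q - 1) * b = b ^ q := by
    rcases hb.eq_or_lt with rfl | hb
    · rw [Real.zero_rpow (by linarith : q ≠ 0)]; simp
    · rw [← Real.rpow_add_one hb.ne']; ring_nf
  have h3 : b ^ (q - 1) * (b - c) ≤ b ^ (q - 1) * a :=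
    mul_le_mul_of_nonneg_left h (Real.rpow_nonneg hb _)
  have h4 : q * (b ^ (q - 1) * (b - c)) ≤ q * (b ^ (q - 1) * a) :=
    mul_le_mul_of_nonneg_left h3 (by linarith)
  have h5 : b ^ (q - 1) * (b - c) = b ^ q - b ^ (q - 1) * c := by rw [mul_sub, h2]
  rw [h5] at h4
  linarith

theorem aux_pisier {𝕜 : Type*} [RCLike 𝕜] {F : Type*} [NormedAddCommGroup F] [NormedSpace 𝕜 F]
    {d : ℕ} (u : (Fin d → 𝕜) →ₗ[𝕜] F) {q D : ℝ} (hq : 1 < q)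
    (hD : ∀ (m : ℕ) (z : Fin m → Fin d → 𝕜), (∀ t, ∑ j, ‖z j t‖ ≤ 1) →
      ∑ j, ‖u (z j)‖ ^ q ≤ D)
    {β : Type*} [Fintype β] (y : β → Fin d → 𝕜) (hy : ∀ b t, ‖y b t‖ ≤ 1)
    {R : ℝ} (hR0 : 0 < R) (hR : ∀ t, ∑ b, ‖y b t‖ ≤ R) :
    ∑ b, ‖u (y b)‖ ^ q ≤ q * R * D := by
  have hq0 : 0 < q := by linarith
  set A : Set ℝ := {r | ∃ (m : ℕ) (z : Fin m → Fin d → 𝕜), (∀ t, ∑ j, ‖z j t‖ ≤ 1) ∧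
    r = ∑ j, ‖u (z j)‖ ^ q} with hA
  have hne : A.Nonempty := ⟨0, 0, Fin.elim0, by simp, by simp⟩
  have hbd : BddAbove A := ⟨D, by rintro r ⟨m, z, hz, rfl⟩; exact hD m z hz⟩
  set S := sSup A with hS
  have hSle : ∀ (m : ℕ) (z : Fin m → Fin d → 𝕜), (∀ t, ∑ j, ‖z j t‖ ≤ 1) →
      ∑ j, ‖u (z j)‖ ^ q ≤ S := fun m z hz => le_csSup hbd ⟨m, z, hz, rfl⟩
  have hSD : S ≤ D := csSup_le hne (by rintro r ⟨m, z, hz, rfl⟩; exact hD m z hz)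
  suffices h : ∑ b, ‖u (y b)‖ ^ q ≤ q * R * S from
    h.trans (mul_le_mul_of_nonneg_left hSD (by positivity))
  refine le_of_forall_pos_le_add fun η hη => ?_
  set δ := η / (Fintype.card β + 1) with hδ
  have hδ0 : 0 < δ := by positivity
  obtain ⟨r, ⟨m, z, hz, rfl⟩, hr⟩ := exists_lt_of_lt_csSup hne (sub_lt_self S hδ0)
  choose f hf1 hf2 using fun j => exists_dual_vector'' 𝕜 (u (z j))
  let M : (Fin d → ℝ) → Fin m → Fin d → 𝕜 := fun h j t => (h t : 𝕜) * z j t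
  let L : (Fin d → ℝ) → ℝ := fun h => ∑ j, ‖u (z j)‖ ^ (q - 1) * RCLike.re (f j (u (M h j)))
  have hfle : ∀ j w, RCLike.re (f j w) ≤ ‖w‖ := fun j w =>
    (RCLike.re_le_norm _).trans ((f j).le_of_opNorm_le (hf1 j) w |>.trans (by simp))
  -- single vector bound
  have key : ∀ b, ‖u (y b)‖ ^ q ≤ δ + q * L (fun t => ‖y b t‖) := by
    intro b
    have h1 := hSle (m + 1) (Fin.cons (y b) (M (fun t => 1 - ‖y b t‖))) (by
      intro t
      rw [Fin.sum_univ_succ]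
      simp only [Fin.cons_zero, Fin.cons_succ, M, norm_mul, RCLike.norm_ofReal]
      rw [← Finset.mul_sum, abs_of_nonneg (by linarith [hy b t])]
      nlinarith [hz t, hy b t])
    rw [Fin.sum_univ_succ] at h1
    simp only [Fin.cons_zero, Fin.cons_succ] at h1
    have h2 : ∑ j, (‖u (z j)‖ ^ q -
        q * (‖u (z j)‖ ^ (q - 1) * RCLike.re (f j (u (M (fun t => ‖y b t‖) j))))) ≤
        ∑ j, ‖u (M (fun t => 1 - ‖y b t‖) j)‖ ^ q := by
      refine Finset.sum_le_sum fun j _ => aux_tangent (norm_nonneg _) (norm_nonneg _) hq ?_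
      have e : M (fun t => 1 - ‖y b t‖) j = z j - M (fun t => ‖y b t‖) j := by
        ext t; simp [M]; ring
      have := hfle j (u (M (fun t => 1 - ‖y b t‖) j))
      rw [e, map_sub, map_sub, map_sub, hf2] at this
      rw [e, map_sub]
      simpa using this
    rw [Finset.sum_sub_distrib, ← Finset.mul_sum] at h2
    simp only [L]
    linarith
  have hLsum : ∑ b, L (fun t => ‖y b t‖) = L (fun t => ∑ b, ‖y b t‖) := by
    simp only [L]
    rw [Finset.sum_comm]
    refine Finset.sum_congr rfl fun j _ => ?_
    rw [← Finset.mul_sum, ← map_sum, ← map_sum, ← map_sum]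
    congr 4
    ext t
    simp [M, Finset.sum_mul]
  have hLle : L (fun t => ∑ b, ‖y b t‖) ≤ R * S := by
    set h' : Fin d → ℝ := fun t => (∑ b, ‖y b t‖) / R with hh'
    have e : ∀ j, M (fun t => ∑ b, ‖y b t‖) j = (R : 𝕜) • M h' j := by
      intro j; ext t
      have : (R : 𝕜) ≠ 0 := by exact_mod_cast hR0.ne'
      simp only [M, h', Pi.smul_apply, smul_eq_mul, RCLike.ofReal_div]
      field_simp
    have hM := hSle m (M h') (by
      intro t
      simp only [M, norm_mul, RCLike.norm_ofReal]
      rw [← Finset.mul_sum]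
      have h0 : 0 ≤ h' t := by positivity
      have h1 : h' t ≤ 1 := by rw [hh']; exact (div_le_one hR0).2 (hR t)
      rw [abs_of_nonneg h0]
      have h2 : 0 ≤ ∑ j, ‖z j t‖ := by positivity
      nlinarith [hz t])
    have hz' := hSle m z hz
    have h3 : L (fun t => ∑ b, ‖y b t‖) ≤ R * ∑ j, ‖u (z j)‖ ^ (q - 1) * ‖u (M h' j)‖ := by
      simp only [L]
      rw [Finset.mul_sum]
      refine Finset.sum_le_sum fun j _ => ?_
      rw [mul_left_comm]
      refine mul_le_mul_of_nonneg_left ?_ (by positivity)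
      refine (hfle j _).trans ?_
      rw [e, map_smul, norm_smul, RCLike.norm_ofReal, abs_of_pos hR0]
    have h4 : q * ∑ j, ‖u (z j)‖ ^ (q - 1) * ‖u (M h' j)‖ ≤
        (q - 1) * ∑ j, ‖u (z j)‖ ^ q + ∑ j, ‖u (M h' j)‖ ^ q := by
      rw [Finset.mul_sum, Finset.mul_sum, ← Finset.sum_add_distrib]
      exact Finset.sum_le_sum fun j _ => aux_young (norm_nonneg _) (norm_nonneg _) hq
    have h5 : q * ∑ j, ‖u (z j)‖ ^ (q - 1) * ‖u (M h' j)‖ ≤ q * S := by nlinarith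
    have h6 := le_of_mul_le_mul_left h5 hq0
    exact h3.trans (mul_le_mul_of_nonneg_left h6 hR0.le)
  calc ∑ b, ‖u (y b)‖ ^ q ≤ ∑ b, (δ + q * L (fun t => ‖y b t‖)) :=
        Finset.sum_le_sum fun b _ => key b
    _ = Fintype.card β * δ + q * L (fun t => ∑ b, ‖y b t‖) := by
        rw [Finset.sum_add_distrib, ← Finset.mul_sum, hLsum]; simp
    _ ≤ η + q * (R * S) := by
        gcongr
        rw [hδ, mul_div_assoc', div_le_iff₀ (by positivity)]
        nlinarith
    _ = _ := by ring

theorem aux_exp_real {m : ℕ} (a : Fin m → ℝ) (ha : ∑ j, a j ^ 2 ≤ 1) :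
    ∑ ε : Fin m → Bool, Real.exp (2 * |∑ j, (if ε j then a j else -a j)|) ≤
      2 ^ m * (2 * Real.exp 2) := by
  have main : ∀ b : Fin m → ℝ, ∑ j, b j ^ 2 ≤ 1 →
      ∑ ε : Fin m → Bool, Real.exp (2 * ∑ j, (if ε j then b j else -b j)) ≤
      2 ^ m * Real.exp 2 := by
    intro b hb
    have e : ∑ ε : Fin m → Bool, Real.exp (2 * ∑ j, (if ε j then b j else -b j)) =
        ∏ j, ∑ c : Bool, Real.exp (2 * (if c then b j else -b j)) := by
      rw [Finset.prod_univ_sum, Fintype.piFinset_univ]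
      refine Finset.sum_congr rfl fun ε _ => ?_
      rw [Finset.mul_sum, Real.exp_sum]
    rw [e]
    calc ∏ j, ∑ c : Bool, Real.exp (2 * (if c then b j else -b j))
        ≤ ∏ j, (2 * Real.exp (2 * b j ^ 2)) := by
          refine Finset.prod_le_prod (fun j _ => by positivity) fun j _ => ?_
          have := Real.cosh_le_exp_half_sq (2 * b j)
          rw [Real.cosh_eq] at this
          simp only [Fintype.sum_bool, if_true, Bool.false_eq_true, if_false]
          rw [show (2 * b j) ^ 2 / 2 = 2 * b j ^ 2 by ring] at this
          rw [show 2 * -b j = -(2 * b j) by ring]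
          linarith
      _ = 2 ^ m * Real.exp (2 * ∑ j, b j ^ 2) := by
          rw [Finset.prod_mul_distrib, ← Real.exp_sum, ← Finset.mul_sum]; simp
      _ ≤ _ := by gcongr; linarith
  have h1 := main a ha
  have h2 := main (fun j => -a j) (by simpa using ha)
  calc _ ≤ ∑ ε : Fin m → Bool, (Real.exp (2 * ∑ j, (if ε j then a j else -a j)) +
        Real.exp (2 * ∑ j, (if ε j then -a j else - -a j))) := by
        refine Finset.sum_le_sum fun ε _ => ?_
        have : ∑ j, (if ε j then -a j else - -a j) = -∑ j, (if ε j then a j else -a j) := by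
          rw [← Finset.sum_neg_distrib]
          refine Finset.sum_congr rfl fun j _ => ?_
          split_ifs <;> rfl
        rw [this]
        set s := ∑ j, (if ε j then a j else -a j)
        rcases abs_cases s with ⟨h, _⟩ | ⟨h, _⟩ <;> rw [h]
        · linarith [Real.exp_pos (2 * -s)]
        · linarith [Real.exp_pos (2 * s)]
    _ ≤ _ := by rw [Finset.sum_add_distrib]; linarith

theorem aux_exp {𝕜 : Type*} [RCLike 𝕜] {m : ℕ} (a : Fin m → 𝕜) (ha : ∑ j, ‖a j‖ ^ 2 ≤ 1) :
    ∑ ε : Fin m → Bool, Real.exp ‖∑ j, (if ε j then a j else -a j)‖ ≤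
      2 ^ m * (2 * Real.exp 2) := by
  have hre := aux_exp_real (fun j => RCLike.re (a j)) (le_trans (Finset.sum_le_sum fun j _ => by
    rw [← sq_abs]; gcongr; exact RCLike.abs_re_le_norm _) ha)
  have him := aux_exp_real (fun j => RCLike.im (a j)) (le_trans (Finset.sum_le_sum fun j _ => by
    rw [← sq_abs]; gcongr; exact RCLike.abs_im_le_norm _) ha)
  have : ∀ ε : Fin m → Bool, Real.exp ‖∑ j, (if ε j then a j else -a j)‖ ≤
      (Real.exp (2 * |∑ j, (if ε j then RCLike.re (a j) else -RCLike.re (a j))|) +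
       Real.exp (2 * |∑ j, (if ε j then RCLike.im (a j) else -RCLike.im (a j))|)) / 2 := by
    intro ε
    set X := ∑ j, (if ε j then a j else -a j) with hX
    have e1 : ∑ j, (if ε j then RCLike.re (a j) else -RCLike.re (a j)) = RCLike.re X := by
      rw [hX, map_sum]; refine Finset.sum_congr rfl fun j _ => ?_
      split_ifs <;> simp
    have e2 : ∑ j, (if ε j then RCLike.im (a j) else -RCLike.im (a j)) = RCLike.im X := by
      rw [hX, map_sum]; refine Finset.sum_congr rfl fun j _ => ?_
      split_ifs <;> simp
    rw [e1, e2]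
    have h1 : ‖X‖ ≤ |RCLike.re X| + |RCLike.im X| := by
      conv_lhs => rw [← RCLike.re_add_im X]
      refine (norm_add_le _ _).trans (add_le_add (by simp) ?_)
      rw [norm_mul, RCLike.norm_ofReal]
      refine mul_le_of_le_one_right (abs_nonneg _) ?_
      by_cases hI : (RCLike.I : 𝕜) = 0
      · simp [hI]
      · exact (RCLike.norm_I_of_ne_zero hI).le
    have h2 := Real.exp_le_exp.2 h1
    rw [Real.exp_add] at h2
    have h3 : ∀ r : ℝ, Real.exp (2 * r) = Real.exp r ^ 2 := fun r => by
      rw [two_mul, Real.exp_add, sq]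
    rw [h3, h3]
    nlinarith [sq_nonneg (Real.exp |RCLike.re X| - Real.exp |RCLike.im X|)]
  refine (Finset.sum_le_sum fun ε _ => this ε).trans ?_
  rw [← Finset.sum_div, Finset.sum_add_distrib]
  linarith

theorem aux_cotype {q : ℝ} (hq : 2 ≤ q) {F : Type*} [NormedAddCommGroup F] (hF : HasCotype q F) :
    ∃ C : ℝ, 0 ≤ C ∧ ∀ (m : ℕ) (x : Fin m → F), ∑ j, ‖x j‖ ^ q ≤
      C ^ q / 2 ^ m * ∑ ε : Fin m → Bool, ‖∑ j, (if ε j then x j else -x j)‖ ^ q := by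
  obtain ⟨C, hC, h⟩ := hF
  refine ⟨C, hC, fun m x => ?_⟩
  have hq0 : 0 < q := by linarith
  have h1 := Real.rpow_le_rpow
    (Real.rpow_nonneg (Finset.sum_nonneg fun j _ => Real.rpow_nonneg (norm_nonneg _) _) _)
    (h m x) hq0.le
  rw [← Real.rpow_mul (by positivity), show 1 / q * q = 1 by field_simp, Real.rpow_one,
    Real.mul_rpow hC (by positivity), ← Real.rpow_mul (by positivity)] at h1
  refine h1.trans ?_
  rw [div_mul_eq_mul_div (C ^ q), mul_div_assoc (C ^ q)]
  refine mul_le_mul_of_nonneg_left ?_ (Real.rpow_nonneg hC _)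
  have h2 := Real.rpow_arith_mean_le_arith_mean_rpow (Finset.univ : Finset (Fin m → Bool))
    (fun _ => ((2 : ℝ) ^ m)⁻¹) (fun ε => ‖∑ j, (if ε j then x j else -x j)‖ ^ (2 : ℝ))
    (fun _ _ => by positivity) (by simp) (fun _ _ => Real.rpow_nonneg (norm_nonneg _) _)
    (p := 1 / 2 * q) (by linarith)
  rw [← Finset.mul_sum, ← Finset.mul_sum] at h2
  rw [div_eq_inv_mul _ ((2 : ℝ) ^ m), div_eq_inv_mul _ ((2 : ℝ) ^ m)]
  refine h2.trans (le_of_eq ?_)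
  congr 1
  refine Finset.sum_congr rfl fun ε _ => ?_
  rw [← Real.rpow_mul (norm_nonneg _)]
  congr 1; ring

/-- `k`-th layer of a scalar. -/
noncomputable def auxClip {𝕜 : Type*} [RCLike 𝕜] (k : ℕ) (X : 𝕜) : 𝕜 :=
  ((min ‖X‖ ((k + 1 : ℕ) : ℝ) - min ‖X‖ (k : ℝ) : ℝ) : 𝕜) * (X / (‖X‖ : 𝕜))

theorem auxClip_sum {𝕜 : Type*} [RCLike 𝕜] (N : ℕ) (X : 𝕜) (h : ‖X‖ ≤ N) :
    ∑ k ∈ Finset.range N, auxClip k X = X := by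
  simp only [auxClip]
  rw [← Finset.sum_mul, ← RCLike.ofReal_sum,
    Finset.sum_range_sub (fun k : ℕ => min ‖X‖ (k : ℝ))]
  rw [min_eq_left h]
  simp only [Nat.cast_zero, min_eq_right (norm_nonneg X), sub_zero]
  by_cases hX : X = 0
  · simp [hX]
  · have : (‖X‖ : 𝕜) ≠ 0 := by simpa using hX
    field_simp

theorem auxClip_norm {𝕜 : Type*} [RCLike 𝕜] (k : ℕ) (X : 𝕜) :
    ‖auxClip k X‖ ≤ min ‖X‖ ((k + 1 : ℕ) : ℝ) - min ‖X‖ (k : ℝ) := by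
  have h0 : 0 ≤ min ‖X‖ ((k + 1 : ℕ) : ℝ) - min ‖X‖ (k : ℝ) := by
    rw [sub_nonneg]; exact min_le_min le_rfl (by simp)
  rw [auxClip, norm_mul, RCLike.norm_ofReal, abs_of_nonneg h0]
  refine mul_le_of_le_one_right h0 ?_
  rw [norm_div, RCLike.norm_ofReal, abs_of_nonneg (norm_nonneg _)]
  exact div_self_le_one _

theorem auxClip_le_one {𝕜 : Type*} [RCLike 𝕜] (k : ℕ) (X : 𝕜) : ‖auxClip k X‖ ≤ 1 := by
  refine (auxClip_norm k X).trans ?_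
  push_cast
  rcases min_cases ‖X‖ ((k : ℝ) + 1) with h | h <;> rcases min_cases ‖X‖ (k : ℝ) with h' | h' <;>
    linarith [h.1, h.2, h'.1, h'.2]

theorem auxClip_le_exp {𝕜 : Type*} [RCLike 𝕜] (k : ℕ) (X : 𝕜) :
    ‖auxClip k X‖ ≤ Real.exp ‖X‖ * Real.exp (-k) := by
  rw [← Real.exp_add]
  by_cases h : ‖X‖ ≤ k
  · refine (auxClip_norm k X).trans ?_
    rw [min_eq_left h, min_eq_left (h.trans (by simp))]
    simp [Real.exp_nonneg]
  · exact (auxClip_le_one k X).trans (Real.one_le_exp (by linarith [not_le.1 h]))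

theorem aux_weak_le {𝕜 : Type*} [RCLike 𝕜] {E : Type*} [NormedAddCommGroup E] [NormedSpace 𝕜 E]
    {q : ℝ} (hq : 0 < q) {m : ℕ} (x : Fin m → E) (φ : E →L[𝕜] 𝕜) (hφ : ‖φ‖ ≤ 1) :
    (∑ j, ‖φ (x j)‖ ^ q) ^ (1 / q) ≤ weakLpNorm 𝕜 q x := by
  refine le_ciSup (f := fun φ : {φ : E →L[𝕜] 𝕜 // ‖φ‖ ≤ 1} =>
    (∑ j, ‖φ.1 (x j)‖ ^ q) ^ (1 / q)) ?_ ⟨φ, hφ⟩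
  refine ⟨(∑ j, ‖x j‖ ^ q) ^ (1 / q), ?_⟩
  rintro _ ⟨ψ, rfl⟩
  dsimp only
  gcongr with j
  exact (ψ.1.le_of_opNorm_le ψ.2 _).trans (by simp)

theorem aux_weak_nonneg {𝕜 : Type*} [RCLike 𝕜] {E : Type*} [NormedAddCommGroup E]
    [NormedSpace 𝕜 E] {q : ℝ} {m : ℕ} (x : Fin m → E) : 0 ≤ weakLpNorm 𝕜 q x :=
  Real.iSup_nonneg fun _ => by positivity

/-- Layer decomposition of random sums. -/
def AuxLayer (𝕜 : Type*) [RCLike 𝕜] {E : Type*} [NormedAddCommGroup E] [NormedSpace 𝕜 E]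
    (F : Type*) [NormedAddCommGroup F] [NormedSpace 𝕜 F] (q K W : ℝ) {m : ℕ} (x : Fin m → E) :
    Prop :=
  ∃ (N : ℕ) (Y : (Fin m → Bool) → ℕ → E),
    (∀ ε, ∑ j, (if ε j then x j else -x j) = ∑ k ∈ Finset.range N, Y ε k) ∧
    (∀ ε k, ‖Y ε k‖ ≤ K * W) ∧
    ∀ (u : E →ₗ[𝕜] F) (B : ℝ), 0 ≤ B → (∀ z, ‖u z‖ ≤ B * ‖z‖) → ∀ k,
      ∑ ε, ‖u (Y ε k)‖ ^ q ≤ 2 ^ m * ((B * (K * W)) ^ q * Real.exp (-k))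

theorem aux_layer_one {𝕜 : Type*} [RCLike 𝕜] {E : Type*} [NormedAddCommGroup E]
    [NormedSpace 𝕜 E] (F : Type*) [NormedAddCommGroup F] [NormedSpace 𝕜 F] {q : ℝ} (hq : 2 ≤ q)
    {m : ℕ} (x : Fin m → E) : AuxLayer 𝕜 F q 1 (weakLpNorm 𝕜 1 x) x := by
  set W := weakLpNorm 𝕜 1 x with hW
  have hW0 : 0 ≤ W := aux_weak_nonneg x
  have hn : ∀ ε : Fin m → Bool, ‖∑ j, (if ε j then x j else -x j)‖ ≤ W := by
    intro ε
    obtain ⟨f, hf1, hf2⟩ := exists_dual_vector'' 𝕜 (∑ j, (if ε j then x j else -x j))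
    have h := aux_weak_le (q := 1) one_pos x f hf1
    simp only [Real.rpow_one, div_one] at h
    refine le_trans ?_ h
    have : ‖f (∑ j, (if ε j then x j else -x j))‖ = ‖∑ j, (if ε j then x j else -x j)‖ := by
      rw [hf2]; simp
    rw [← this, map_sum]
    refine (norm_sum_le _ _).trans (Finset.sum_le_sum fun j _ => ?_)
    split_ifs <;> simp
  refine ⟨1, fun ε k => if k = 0 then ∑ j, (if ε j then x j else -x j) else 0, ?_, ?_, ?_⟩
  · intro ε; simp
  · intro ε k
    dsimp only
    split_ifs
    · rw [one_mul]; exact hn ε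
    · simpa using hW0
  · intro u B hB hu k
    have hq0 : 0 < q := by linarith
    rw [one_mul]
    by_cases hk : k = 0
    · simp only [hk, if_true, Nat.cast_zero, neg_zero, Real.exp_zero, mul_one]
      calc _ ≤ ∑ ε : Fin m → Bool, (B * W) ^ q := by
            refine Finset.sum_le_sum fun ε _ => ?_
            gcongr
            exact (hu _).trans (mul_le_mul_of_nonneg_left (hn ε) hB)
        _ = _ := by simp
    · simp only [hk, if_false, map_zero, norm_zero, Real.zero_rpow hq0.ne', Finset.sum_const_zero]
      positivity

theorem aux_layer_linfty {𝕜 : Type*} [RCLike 𝕜] {E : Type*} [NormedAddCommGroup E]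
    [NormedSpace 𝕜 E] {F : Type*} [NormedAddCommGroup F] [NormedSpace 𝕜 F] {q : ℝ} (hq : 2 ≤ q)
    (hF : HasCotype q F) (hE : IsLinftySpace 𝕜 E) :
    ∃ K : ℝ, 0 ≤ K ∧ ∀ (m : ℕ) (x : Fin m → E), AuxLayer 𝕜 F q K (weakLpNorm 𝕜 2 x) x := by
  obtain ⟨C, hC0, hC⟩ := aux_cotype hq hF
  obtain ⟨lam, hlam, hE⟩ := hE
  have hq0 : 0 < q := by linarith
  set c : ℝ := q * (2 * Real.exp 2) with hc
  have hc0 : 0 < c := by positivity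
  refine ⟨lam * (1 + C * c ^ (1 / q)), by positivity, fun m x => ?_⟩
  set W := weakLpNorm 𝕜 2 x with hW
  have hW0 : 0 ≤ W := aux_weak_nonneg x
  obtain ⟨P, hMP, hPfin, v, hv⟩ := hE (Submodule.span 𝕜 (Set.range x))
    (FiniteDimensional.span_of_finite 𝕜 (Set.finite_range x))
  generalize Module.finrank 𝕜 P = d at v hv
  have hxP : ∀ j, x j ∈ P := fun j => hMP (Submodule.subset_span ⟨j, rfl⟩)
  let x' : Fin m → P := fun j => ⟨x j, hxP j⟩
  set nv := ‖(v : P →L[𝕜] (Fin d → 𝕜))‖ with hnv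
  set nw := ‖(v.symm : (Fin d → 𝕜) →L[𝕜] P)‖ with hnw
  have hnv0 : 0 ≤ nv := norm_nonneg _
  have hnw0 : 0 ≤ nw := norm_nonneg _
  set ρ := nv * W with hρ
  have hρ0 : 0 ≤ ρ := by positivity
  -- coordinates
  have hco : ∀ t, ∑ j, ‖v (x' j) t‖ ^ 2 ≤ ρ ^ 2 := by
    intro t
    let g : P →L[𝕜] 𝕜 := (ContinuousLinearMap.proj t).comp (v : P →L[𝕜] (Fin d → 𝕜))
    have hg : ‖g‖ ≤ nv := by
      refine ContinuousLinearMap.opNorm_le_bound _ hnv0 fun z => ?_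
      exact (norm_le_pi_norm (v z) t).trans ((v : P →L[𝕜] (Fin d → 𝕜)).le_opNorm z)
    obtain ⟨G, hG1, hG2⟩ := exists_extension_norm_eq P g
    have hGn : ‖G‖ ≤ nv := hG2.trans_le hg
    have hGx : ∀ j, G (x j) = v (x' j) t := fun j => hG1 (x' j)
    have hsum : ∑ j, ‖G (x j)‖ ^ 2 ≤ ρ ^ 2 := by
      rcases hnv0.eq_or_lt with h0 | hpos
      · have : G = 0 := norm_le_zero_iff.1 (hGn.trans h0.symm.le)
        rw [this]; simp; positivity
      · have h := aux_weak_le (q := 2) two_pos x (((nv⁻¹ : ℝ) : 𝕜) • G) (by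
          rw [norm_smul, RCLike.norm_ofReal, abs_of_pos (by positivity)]
          rw [inv_mul_le_iff₀ hpos]; simpa using hGn)
        rw [← Real.sqrt_eq_rpow] at h
        have h2 := (Real.sqrt_le_left hW0).1 h
        simp only [_root_.smul_apply, norm_smul, RCLike.norm_ofReal,
          Real.rpow_ofNat, mul_pow, sq_abs] at h2
        rw [← Finset.mul_sum, inv_pow, inv_mul_le_iff₀ (by positivity)] at h2
        rw [hρ, mul_pow]; exact h2
    simpa only [hGx] using hsum
  obtain ⟨a, ha1, ha2⟩ : ∃ a : Fin m → Fin d → 𝕜, (∀ j, v (x' j) = (ρ : 𝕜) • a j) ∧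
      ∀ t, ∑ j, ‖a j t‖ ^ 2 ≤ 1 := by
    rcases hρ0.eq_or_lt with h0 | hpos
    · refine ⟨fun _ => 0, fun j => ?_, by simp⟩
      ext t
      have h1 := hco t
      rw [← h0] at h1
      have h2 : ‖v (x' j) t‖ ^ 2 ≤ 0 := by
        refine (Finset.single_le_sum (f := fun j => ‖v (x' j) t‖ ^ 2)
          (fun _ _ => by positivity) (Finset.mem_univ j)).trans (by simpa using h1)
      have h3 : ‖v (x' j) t‖ = 0 := by nlinarith [norm_nonneg (v (x' j) t)]
      simpa using h3
    · have hρn : (ρ : 𝕜) ≠ 0 := by exact_mod_cast hpos.ne'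
      refine ⟨fun j => (ρ : 𝕜)⁻¹ • v (x' j), fun j => ?_, fun t => ?_⟩
      · rw [smul_inv_smul₀ hρn]
      · simp only [Pi.smul_apply, norm_smul, norm_inv, RCLike.norm_ofReal, mul_pow, inv_pow, sq_abs]
        rw [← Finset.mul_sum, inv_mul_le_iff₀ (by positivity), mul_one]
        exact hco t
  let Xs : (Fin m → Bool) → Fin d → 𝕜 := fun ε t => ∑ j, (if ε j then a j t else -a j t)
  let y : ℕ → (Fin m → Bool) → Fin d → 𝕜 := fun k ε t => auxClip k (Xs ε t)
  let ws : (Fin d → 𝕜) →ₗ[𝕜] E :=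
    P.subtype ∘ₗ (v.symm : (Fin d → 𝕜) →L[𝕜] P).toLinearMap ∘ₗ ((ρ : 𝕜) • LinearMap.id)
  have hws : ∀ z, ‖ws z‖ ≤ lam * W * ‖z‖ := by
    intro z
    have h1 : ‖ws z‖ = ‖(v.symm : (Fin d → 𝕜) →L[𝕜] P) ((ρ : 𝕜) • z)‖ := rfl
    rw [h1]
    refine (ContinuousLinearMap.le_opNorm _ _).trans ?_
    rw [norm_smul, RCLike.norm_ofReal, abs_of_nonneg hρ0, hρ]
    calc nw * (nv * W * ‖z‖) = (nv * nw) * (W * ‖z‖) := by ring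
      _ ≤ lam * (W * ‖z‖) := by gcongr
      _ = _ := by ring
  have hwa : ∀ j, ws (a j) = x j := by
    intro j
    have h1 : ws (a j) = (v.symm ((ρ : 𝕜) • a j) : E) := rfl
    rw [h1, ← ha1, v.symm_apply_apply]
  obtain ⟨N, hN⟩ : ∃ N : ℕ, ∀ ε t, ‖Xs ε t‖ ≤ N := by
    obtain ⟨N, hN⟩ := exists_nat_ge (∑ ε, ∑ t, ‖Xs ε t‖)
    refine ⟨N, fun ε t => le_trans ?_ hN⟩
    refine (Finset.single_le_sum (f := fun t => ‖Xs ε t‖)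
      (fun _ _ => norm_nonneg _) (Finset.mem_univ t)).trans ?_
    exact Finset.single_le_sum (f := fun ε => ∑ t, ‖Xs ε t‖)
      (fun _ _ => by positivity) (Finset.mem_univ ε)
  have hynorm : ∀ k ε, ‖y k ε‖ ≤ 1 := fun k ε =>
    (pi_norm_le_iff_of_nonneg zero_le_one).2 fun t => auxClip_le_one _ _
  refine ⟨N, fun ε k => ws (y k ε), ?_, ?_, ?_⟩
  · intro ε
    rw [← map_sum]
    have : ∑ k ∈ Finset.range N, y k ε = ∑ j, (if ε j then a j else -a j) := by
      ext t
      simp only [Finset.sum_apply, y]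
      rw [auxClip_sum N _ (hN ε t)]
      refine Finset.sum_congr rfl fun j _ => ?_
      split_ifs <;> rfl
    rw [this, map_sum]
    refine Finset.sum_congr rfl fun j _ => ?_
    split_ifs
    · rw [hwa]
    · rw [map_neg, hwa]
  · intro ε k
    refine (hws _).trans ?_
    have h1 : lam * W * ‖y k ε‖ ≤ lam * W * 1 := by gcongr; exact hynorm k ε
    refine h1.trans ?_
    have : 0 ≤ C * c ^ (1 / q) := by positivity
    have h2 : 0 ≤ lam * W := by positivity
    nlinarith
  · intro u B hB hu k
    have hub : ∀ z, ‖(u ∘ₗ ws) z‖ ≤ B * (lam * W) * ‖z‖ := by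
      intro z
      refine (hu _).trans ?_
      rw [mul_assoc]
      exact mul_le_mul_of_nonneg_left (hws z) hB
    have hD : ∀ (m : ℕ) (z : Fin m → Fin d → 𝕜), (∀ t, ∑ j, ‖z j t‖ ≤ 1) →
        ∑ j, ‖(u ∘ₗ ws) (z j)‖ ^ q ≤ C ^ q * (B * (lam * W)) ^ q := by
      intro m z hz
      refine (hC m _).trans ?_
      have : ∑ ε : Fin m → Bool,
          ‖∑ j, (if ε j then (u ∘ₗ ws) (z j) else -(u ∘ₗ ws) (z j))‖ ^ q ≤
          ∑ ε : Fin m → Bool, (B * (lam * W)) ^ q := by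
        refine Finset.sum_le_sum fun ε _ => ?_
        gcongr
        have e : ∑ j, (if ε j then (u ∘ₗ ws) (z j) else -(u ∘ₗ ws) (z j)) =
            (u ∘ₗ ws) (∑ j, (if ε j then z j else -z j)) := by
          rw [map_sum]
          refine Finset.sum_congr rfl fun j _ => ?_
          split_ifs
          · rfl
          · rw [map_neg]
        rw [e]
        refine (hub _).trans (mul_le_of_le_one_right (by positivity) ?_)
        refine (pi_norm_le_iff_of_nonneg zero_le_one).2 fun t => ?_
        rw [Finset.sum_apply]
        refine (norm_sum_le _ _).trans (le_trans (Finset.sum_le_sum fun j _ => ?_) (hz t))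
        split_ifs <;> simp
      calc _ ≤ C ^ q / 2 ^ m * ∑ ε : Fin m → Bool, (B * (lam * W)) ^ q := by gcongr
        _ = _ := by simp; field_simp
    have h := aux_pisier (u ∘ₗ ws) (by linarith : 1 < q) hD (y k)
      (fun ε t => auxClip_le_one _ _) (R := 2 ^ m * (2 * Real.exp 2) * Real.exp (-k))
      (by positivity) (fun t => by
        calc _ ≤ ∑ ε, Real.exp ‖Xs ε t‖ * Real.exp (-k) :=
              Finset.sum_le_sum fun ε _ => auxClip_le_exp _ _
          _ = (∑ ε, Real.exp ‖Xs ε t‖) * Real.exp (-k) := by rw [Finset.sum_mul]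
          _ ≤ _ := by
              gcongr
              exact aux_exp (fun j => a j t) (ha2 t))
    refine h.trans ?_
    calc q * (2 ^ m * (2 * Real.exp 2) * Real.exp (-k)) * (C ^ q * (B * (lam * W)) ^ q)
        = 2 ^ m * ((C ^ q * c * (B * (lam * W)) ^ q) * Real.exp (-k)) := by rw [hc]; ring
      _ = 2 ^ m * ((B * (lam * (C * c ^ (1 / q)) * W)) ^ q * Real.exp (-k)) := by
          congr 2
          have : c = (c ^ (1 / q)) ^ q := by
            rw [← Real.rpow_mul hc0.le, show 1 / q * q = 1 by field_simp, Real.rpow_one]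
          conv_lhs => rw [this]
          rw [← Real.mul_rpow hC0 (by positivity), ← Real.mul_rpow (by positivity) (by positivity)]
          congr 1; ring
      _ ≤ _ := by
          gcongr
          linarith

theorem aux_iter_fin {α β : Type*} [Fintype α] [Fintype β] {D : ℝ} (hD : 0 ≤ D) :
    ∀ (n : ℕ) (g : (Fin n → α ⊕ β) → ℝ),
      (∀ z i, ∑ a, g (Function.update z i (Sum.inl a)) ≤
        D * ∑ b, g (Function.update z i (Sum.inr b))) →
      ∑ r : Fin n → α, g (fun i => Sum.inl (r i)) ≤
        D ^ n * ∑ e : Fin n → β, g (fun i => Sum.inr (e i)) := by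
  intro n
  induction n with
  | zero =>
    intro g _
    simp only [Finset.univ_unique, Finset.sum_singleton, pow_zero, one_mul]
    apply le_of_eq
    congr 1
    exact Subsingleton.elim _ _
  | succ n ih =>
    intro g hg
    have split : ∀ {γ : Type _} [Fintype γ] (f : (Fin (n + 1) → γ) → ℝ),
        ∑ r, f r = ∑ a, ∑ r : Fin n → γ, f (Fin.cons a r) := by
      intro γ _ f
      rw [← Fintype.sum_prod_type']
      exact (Fintype.sum_equiv (Fin.consEquiv fun _ => γ) _ _ (fun p => rfl)).symm
    have split' : ∀ {γ : Type _} [Fintype γ] (f : (Fin (n + 1) → γ) → ℝ),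
        ∑ r, f r = ∑ a, ∑ r : Fin n → γ, f (Fin.cons a r) := by
      intro γ _ f
      rw [← Fintype.sum_prod_type']
      exact (Fintype.sum_equiv (Fin.consEquiv fun _ => γ) _ _ (fun p => rfl)).symm
    have cons_l : ∀ a (r : Fin n → α), (fun i => Sum.inl ((Fin.cons a r : Fin (n + 1) → α) i) :
        Fin (n + 1) → α ⊕ β) = Fin.cons (Sum.inl a) (fun i => Sum.inl (r i)) := by
      intro a r; ext i; refine Fin.cases ?_ (fun i => ?_) i <;> simp
    have cons_r : ∀ a (r : Fin n → β), (fun i => Sum.inr ((Fin.cons a r : Fin (n + 1) → β) i) :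
        Fin (n + 1) → α ⊕ β) = Fin.cons (Sum.inr a) (fun i => Sum.inr (r i)) := by
      intro a r; ext i; refine Fin.cases ?_ (fun i => ?_) i <;> simp
    rw [split, split']
    simp only [cons_l, cons_r]
    have step1 : ∀ c : α ⊕ β, ∑ r : Fin n → α, g (Fin.cons c (fun i => Sum.inl (r i))) ≤
        D ^ n * ∑ e : Fin n → β, g (Fin.cons c (fun i => Sum.inr (e i))) := by
      intro c
      refine ih (fun z => g (Fin.cons c z)) fun z i => ?_
      have := hg (Fin.cons c z) i.succ
      simpa only [Fin.cons_update] using this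
    calc _ ≤ ∑ a : α, D ^ n * ∑ e : Fin n → β, g (Fin.cons (Sum.inl a) (fun i => Sum.inr (e i))) :=
          Finset.sum_le_sum fun a _ => step1 _
      _ = D ^ n * ∑ e : Fin n → β, ∑ a : α, g (Fin.cons (Sum.inl a) (fun i => Sum.inr (e i))) := by
          rw [← Finset.mul_sum, Finset.sum_comm]
      _ ≤ D ^ n * ∑ e : Fin n → β, D * ∑ b : β,
            g (Fin.cons (Sum.inr b) (fun i => Sum.inr (e i))) := by
          refine mul_le_mul_of_nonneg_left (Finset.sum_le_sum fun e _ => ?_) (by positivity)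
          rcases isEmpty_or_nonempty (α ⊕ β) with hemp | ⟨⟨c⟩⟩
          · have h1 : IsEmpty α := ⟨fun a => hemp.false (Sum.inl a)⟩
            have h2 : IsEmpty β := ⟨fun a => hemp.false (Sum.inr a)⟩
            simp
          · have := hg (Fin.cons c (fun i => Sum.inr (e i))) 0
            simpa only [Fin.update_cons_zero] using this
      _ = _ := by
          rw [← Finset.mul_sum, Finset.sum_comm, pow_succ]; ring

theorem aux_iter {ι α β : Type*} [Fintype ι] [DecidableEq ι] [Fintype α] [Fintype β] {D : ℝ}
    (hD : 0 ≤ D) (g : (ι → α ⊕ β) → ℝ)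
    (hg : ∀ z i, ∑ a, g (Function.update z i (Sum.inl a)) ≤
        D * ∑ b, g (Function.update z i (Sum.inr b))) :
    ∑ r : ι → α, g (fun i => Sum.inl (r i)) ≤
        D ^ Fintype.card ι * ∑ e : ι → β, g (fun i => Sum.inr (e i)) := by
  let σ := Fintype.equivFin ι
  have h := aux_iter_fin hD (Fintype.card ι) (fun z => g (fun i => z (σ i))) (by
    intro z i
    have := hg (fun i => z (σ i)) (σ.symm i)
    have e : ∀ c, (fun j => Function.update z i c (σ j)) =
        Function.update (fun j => z (σ j)) (σ.symm i) c := by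
      intro c; ext j
      by_cases hj : σ j = i
      · subst hj; simp
      · have : j ≠ σ.symm i := fun h => hj (by simp [h])
        simp [hj, this]
    simpa only [e] using this)
  have e1 : ∑ r : ι → α, g (fun i => Sum.inl (r i)) =
      ∑ r : Fin (Fintype.card ι) → α, g (fun i => Sum.inl (r (σ i))) :=
    Fintype.sum_equiv (σ.arrowCongr (Equiv.refl α)) _ _ (fun r => by simp)
  have e2 : ∑ r : ι → β, g (fun i => Sum.inr (r i)) =
      ∑ r : Fin (Fintype.card ι) → β, g (fun i => Sum.inr (r (σ i))) :=
    Fintype.sum_equiv (σ.arrowCongr (Equiv.refl β)) _ _ (fun r => by simp)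
  rw [e1, e2]
  exact h

theorem aux_avg {ι β : Type*} [Fintype ι] [DecidableEq ι] [Fintype β] (i : ι)
    (g : (ι → β) → ℝ) {R : ℝ} (h : ∀ e, ∑ b, g (Function.update e i b) ≤ R) :
    Fintype.card β * ∑ e, g e ≤ Fintype.card (ι → β) * R := by
  have h1 : ∑ p : (ι → β) × β, g (Function.update p.1 i p.2) = ∑ p : (ι → β) × β, g p.1 := by
    refine Finset.sum_nbij' (fun p => (Function.update p.1 i p.2, p.1 i))
      (fun p => (Function.update p.1 i p.2, p.1 i)) ?_ ?_ ?_ ?_ ?_ <;> simp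
  rw [Fintype.sum_prod_type, Fintype.sum_prod_type] at h1
  simp only [Finset.sum_const, Finset.card_univ, nsmul_eq_mul] at h1
  rw [← Finset.mul_sum] at h1
  rw [← h1]
  refine (Finset.sum_le_sum fun e _ => h e).trans ?_
  simp

theorem aux_minkowski {κ β F : Type*} [Fintype β] [NormedAddCommGroup F] {q : ℝ} (hq : 1 ≤ q)
    (s : Finset κ) (f : κ → β → F) :
    (∑ b, ‖∑ k ∈ s, f k b‖ ^ q) ^ (1 / q) ≤ ∑ k ∈ s, (∑ b, ‖f k b‖ ^ q) ^ (1 / q) := by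
  classical
  have hq0 : 0 < q := by linarith
  induction s using Finset.induction_on with
  | empty => simp [Real.zero_rpow hq0.ne', Real.zero_rpow (inv_ne_zero hq0.ne')]
  | insert a s ha ih =>
    simp only [Finset.sum_insert ha]
    refine le_trans ?_ (add_le_add_right ih _)
    refine le_trans ?_ (Real.Lp_add_le_of_nonneg _ hq (fun _ _ => norm_nonneg _)
      (fun _ _ => norm_nonneg _))
    gcongr with b
    exact norm_add_le _ _

theorem aux_core {𝕜 : Type*} [RCLike 𝕜] {ι : Type*} [Fintype ι] [Nonempty ι] {E : ι → Type*}
    [∀ i, NormedAddCommGroup (E i)] [∀ i, NormedSpace 𝕜 (E i)]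
    {F : Type*} [NormedAddCommGroup F] [NormedSpace 𝕜 F] {q : ℝ} (hq : 2 ≤ q)
    (hF : HasCotype q F) (p : ι → ℝ) (K : ι → ℝ) (hK : ∀ i, 0 ≤ K i)
    (hL : ∀ i (m : ℕ) (x : Fin m → E i), AuxLayer 𝕜 F q (K i) (weakLpNorm 𝕜 (p i) x) x)
    (T : ContinuousMultilinearMap 𝕜 E F) : ∃ C, 0 ≤ C ∧ AbsSummingWith 𝕜 q p C ⇑T := by
  classical
  obtain ⟨C, hC0, hC⟩ := aux_cotype hq hF
  have hq0 : 0 < q := by linarith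
  set n := Fintype.card ι with hn
  have hn0 : 0 < n := Fintype.card_pos
  set θ : ℝ := Real.exp (-(1 / (n * q))) with hθ
  have hθ0 : 0 < θ := Real.exp_pos _
  have hθ1 : θ < 1 := by
    rw [hθ, Real.exp_lt_one_iff]
    have : (0 : ℝ) < n := by exact_mod_cast hn0
    have : 0 < 1 / (n * q) := by positivity
    linarith
  set Γ : ℝ := ((1 - θ)⁻¹) ^ n with hΓ
  have hΓ0 : 0 ≤ Γ := by
    have : 0 < 1 - θ := by linarith
    positivity
  refine ⟨C ^ n * (‖T‖ * (∏ i, K i) * Γ),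
    mul_nonneg (by positivity) (mul_nonneg (mul_nonneg (norm_nonneg _)
      (Finset.prod_nonneg fun i _ => hK i)) hΓ0), fun m x => ?_⟩
  set W : ι → ℝ := fun i => weakLpNorm 𝕜 (p i) (x i) with hW
  have hW0 : ∀ i, 0 ≤ W i := fun i => aux_weak_nonneg _
  choose N Y hY1 hY2 hY3 using fun i => hL i m (x i)
  let X : ∀ i, (Fin m → Bool) → E i := fun i ε => ∑ j, (if ε j then x i j else -x i j)
  set B : ℝ := ‖T‖ * ∏ i, (K i * W i) with hB
  have hKW : ∀ i, 0 ≤ K i * W i := fun i => mul_nonneg (hK i) (hW0 i)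
  have hB0 : 0 ≤ B := mul_nonneg (norm_nonneg _) (Finset.prod_nonneg fun i _ => hKW i)
  -- step 1: cotype in each variable
  have step1 : ∑ r : ι → Fin m, ‖T (fun i => x i (r i))‖ ^ q ≤
      (C ^ q / 2 ^ m) ^ n * ∑ e : ι → (Fin m → Bool), ‖T (fun i => X i (e i))‖ ^ q := by
    let y : ∀ i, Fin m ⊕ (Fin m → Bool) → E i := fun i => Sum.elim (x i) (X i)
    refine aux_iter (α := Fin m) (β := Fin m → Bool) (by positivity)
      (fun z => ‖T (fun i => y i (z i))‖ ^ q) ?_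
    intro z i
    have e : ∀ c, (fun j => y j (Function.update z i c j)) =
        Function.update (fun j => y j (z j)) i (y i c) := by
      intro c; ext j
      by_cases hj : j = i
      · subst hj; simp
      · simp [hj]
    simp only [e, y, Sum.elim_inl, Sum.elim_inr]
    refine (hC m fun a => T (Function.update (fun j => y j (z j)) i (x i a))).trans (le_of_eq ?_)
    congr 1
    refine Finset.sum_congr rfl fun ε _ => ?_
    congr 2
    have h := map_sum (T.toMultilinearMap.toLinearMap (fun j => y j (z j)) i)
      (fun j => if ε j then x i j else -x i j) Finset.univ
    simp only [MultilinearMap.toLinearMap_apply, ContinuousMultilinearMap.coe_coe] at h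
    refine Eq.trans ?_ h.symm
    refine Finset.sum_congr rfl fun j _ => ?_
    split_ifs
    · rfl
    · exact (T.toMultilinearMap.map_update_neg _ i (x i j)).symm
  -- step 2: bound for each choice of layers
  have step2 : ∀ (κ : ι → ℕ), (∑ e : ι → (Fin m → Bool),
      ‖T (fun i => Y i (e i) (κ i))‖ ^ q) ^ (1 / q) ≤
      ((2 : ℝ) ^ m) ^ (n / q) * B * ∏ i, θ ^ κ i := by
    intro κ
    set Q := ∑ e : ι → (Fin m → Bool), ‖T (fun i => Y i (e i) (κ i))‖ ^ q with hQ
    have hQ0 : 0 ≤ Q := by positivity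
    have hone : ∀ i, Q ≤ ((2 : ℝ) ^ m) ^ n * (B ^ q * Real.exp (-(κ i))) := by
      intro i
      have h := aux_avg i (fun e : ι → (Fin m → Bool) => ‖T (fun i => Y i (e i) (κ i))‖ ^ q)
        (R := 2 ^ m * (B ^ q * Real.exp (-(κ i)))) (by
          intro e
          have e1 : ∀ b, (fun j => Y j (Function.update e i b j) (κ j)) =
              Function.update (fun j => Y j (e j) (κ j)) i (Y i b (κ i)) := by
            intro c; ext j
            by_cases hj : j = i
            · subst hj; simp
            · simp [hj]
          simp only [e1]
          have hB' : 0 ≤ ‖T‖ * ∏ j ∈ Finset.univ.erase i, (K j * W j) :=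
            mul_nonneg (norm_nonneg _) (Finset.prod_nonneg fun i _ => hKW i)
          have h := hY3 i (T.toMultilinearMap.toLinearMap (fun j => Y j (e j) (κ j)) i)
            (‖T‖ * ∏ j ∈ Finset.univ.erase i, (K j * W j)) hB' (by
              intro z
              simp only [MultilinearMap.toLinearMap_apply, ContinuousMultilinearMap.coe_coe]
              refine (T.le_opNorm _).trans ?_
              rw [mul_assoc]
              refine mul_le_mul_of_nonneg_left ?_ (norm_nonneg _)
              rw [← Finset.mul_prod_erase Finset.univ _ (Finset.mem_univ i), mul_comm]
              simp only [Function.update_self]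
              refine mul_le_mul_of_nonneg_right ?_ (norm_nonneg _)
              refine Finset.prod_le_prod (fun _ _ => norm_nonneg _) fun j hj => ?_
              rw [Function.update_of_ne (Finset.ne_of_mem_erase hj)]
              exact hY2 j _ _) (κ i)
          have e2 : ‖T‖ * (∏ j ∈ Finset.univ.erase i, (K j * W j)) * (K i * W i) = B := by
            rw [hB, ← Finset.mul_prod_erase Finset.univ (fun j => K j * W j) (Finset.mem_univ i)]
            ring
          rw [show weakLpNorm 𝕜 (p i) (x i) = W i from rfl, e2] at h
          exact h)
      simp only [Fintype.card_fun, Fintype.card_bool, Fintype.card_fin, Nat.cast_pow,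
        Nat.cast_ofNat] at h
      have hp : (0 : ℝ) < 2 ^ m := by positivity
      refine le_of_mul_le_mul_left (h.trans (le_of_eq ?_)) hp
      rw [← hn]; ring
    -- geometric mean
    have hnq : (0 : ℝ) < n := by exact_mod_cast hn0
    have hone' : ∀ i, Q ^ (1 / (n * q)) ≤
        (((2 : ℝ) ^ m) ^ n * B ^ q) ^ (1 / (n * q)) * θ ^ κ i := by
      intro i
      have h := Real.rpow_le_rpow hQ0 (hone i) (show 0 ≤ 1 / (n * q) by positivity)
      refine h.trans (le_of_eq ?_)
      rw [← mul_assoc, Real.mul_rpow (by positivity) (Real.exp_nonneg _)]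
      congr 1
      rw [← Real.exp_mul, hθ, ← Real.exp_nat_mul]
      congr 1; ring
    have hprod := Finset.prod_le_prod (s := Finset.univ) (fun i _ => Real.rpow_nonneg hQ0 _)
      (fun i _ => hone' i)
    rw [Finset.prod_mul_distrib, Finset.prod_const, Finset.prod_const, Finset.card_univ, ← hn,
      ← Real.rpow_mul_natCast hQ0, ← Real.rpow_mul_natCast (by positivity),
      show 1 / (n * q) * n = 1 / q by field_simp] at hprod
    refine hprod.trans (le_of_eq ?_)
    congr 1
    rw [Real.mul_rpow (by positivity) (by positivity), ← Real.rpow_mul hB0,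
      show q * (1 / q) = 1 by field_simp, Real.rpow_one, ← Real.rpow_natCast (_ ^ m),
      ← Real.rpow_mul (by positivity)]
    congr 2
    ring
  -- step 3: sum up
  have step3 : (∑ e : ι → (Fin m → Bool), ‖T (fun i => X i (e i))‖ ^ q) ^ (1 / q) ≤
      ((2 : ℝ) ^ m) ^ (n / q) * B * Γ := by
    have e : ∀ e : ι → (Fin m → Bool), T (fun i => X i (e i)) =
        ∑ κ ∈ Fintype.piFinset (fun i => Finset.range (N i)), T (fun i => Y i (e i) (κ i)) := by
      intro e
      have : (fun i => X i (e i)) = fun i => ∑ k ∈ Finset.range (N i), Y i (e i) k := by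
        ext i; exact hY1 i (e i)
      rw [this]
      exact T.toMultilinearMap.map_sum_finset (fun i k => Y i (e i) k) _
    simp only [e]
    refine (aux_minkowski (by linarith) _ _).trans ?_
    refine (Finset.sum_le_sum fun κ _ => step2 κ).trans ?_
    rw [← Finset.mul_sum, ← Finset.prod_univ_sum]
    refine mul_le_mul_of_nonneg_left ?_ (by positivity)
    rw [hΓ, hn, ← Finset.card_univ, ← Finset.prod_const]
    refine Finset.prod_le_prod (fun i _ => by positivity) fun i _ => ?_
    rw [← tsum_geometric_of_lt_one hθ0.le hθ1]
    exact (summable_geometric_of_lt_one hθ0.le hθ1).sum_le_tsum _ (fun _ _ => by positivity)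
  -- diagonal
  have step0 : ∑ j, ‖T (fun i => x i j)‖ ^ q ≤ ∑ r : ι → Fin m, ‖T (fun i => x i (r i))‖ ^ q := by
    have hinj : Function.Injective (fun (j : Fin m) (_ : ι) => j) := fun a b h =>
      congrFun h (Classical.arbitrary ι)
    have := Finset.sum_map Finset.univ ⟨_, hinj⟩ (fun r : ι → Fin m => ‖T (fun i => x i (r i))‖ ^ q)
    simp only [Function.Embedding.coeFn_mk] at this
    rw [← this]
    exact Finset.sum_le_sum_of_subset_of_nonneg (Finset.subset_univ _) fun _ _ _ => by positivity
  calc (∑ j, ‖T (fun i => x i j)‖ ^ q) ^ (1 / q)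
      ≤ ((C ^ q / 2 ^ m) ^ n *
          ∑ e : ι → (Fin m → Bool), ‖T (fun i => X i (e i))‖ ^ q) ^ (1 / q) := by
        gcongr; exact step0.trans step1
    _ = (C ^ n / ((2 : ℝ) ^ m) ^ (n / q)) *
        (∑ e : ι → (Fin m → Bool), ‖T (fun i => X i (e i))‖ ^ q) ^ (1 / q) := by
        rw [Real.mul_rpow (by positivity) (by positivity)]
        congr 1
        rw [div_pow, Real.div_rpow (by positivity) (by positivity)]
        congr 1
        · rw [← Real.rpow_natCast, ← Real.rpow_mul hC0, ← Real.rpow_mul hC0, ← Real.rpow_natCast]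
          congr 1; field_simp
        · rw [← Real.rpow_natCast (_ ^ m), ← Real.rpow_mul (by positivity)]
          congr 1; ring
    _ ≤ (C ^ n / ((2 : ℝ) ^ m) ^ (n / q)) * (((2 : ℝ) ^ m) ^ (n / q) * B * Γ) := by
        gcongr
    _ = C ^ n * (‖T‖ * (∏ i, K i) * Γ) * ∏ i, W i := by
        have : ((2 : ℝ) ^ m) ^ (n / q) ≠ 0 := by positivity
        rw [hB, Finset.prod_mul_distrib]
        field_simp

universe u v

/-- If `F` has cotype `q` (`2 ≤ q`) and `E₁,…,E_s` are `𝓛_∞`-spaces, then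
for any further Banach spaces `G₁,…,G_k`, every continuous multilinear map from
`E₁ × ⋯ × E_s × G₁ × ⋯ × G_k` into `F` is absolutely `(q; 2,…,2,1,…,1)`-summing. -/
theorem absSumming_cotype_Linfty {𝕜 : Type v} [RCLike 𝕜] {s k : ℕ} (hs : 1 ≤ s)
    {E : Fin s → Type u} [∀ i, NormedAddCommGroup (E i)] [∀ i, NormedSpace 𝕜 (E i)]
    [∀ i, CompleteSpace (E i)]
    {F : Type*} [NormedAddCommGroup F] [NormedSpace 𝕜 F] [CompleteSpace F]
    {q : ℝ} (hq2 : 2 ≤ q) (hF : HasCotype q F)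
    (hE : ∀ i, IsLinftySpace 𝕜 (E i)) :
    ∀ (G : Fin k → Type u) [∀ j, NormedAddCommGroup (G j)] [∀ j, NormedSpace 𝕜 (G j)]
      [∀ j, CompleteSpace (G j)],
      letI : ∀ i : Fin s ⊕ Fin k, NormedAddCommGroup (Sum.elim E G i) := fun i =>
        Sum.rec (motive := fun i => NormedAddCommGroup (Sum.elim E G i))
          (fun a => inferInstanceAs (NormedAddCommGroup (E a)))
          (fun b => inferInstanceAs (NormedAddCommGroup (G b))) i
      letI : ∀ i : Fin s ⊕ Fin k, NormedSpace 𝕜 (Sum.elim E G i) := fun i =>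
        Sum.rec (motive := fun i => NormedSpace 𝕜 (Sum.elim E G i))
          (fun a => inferInstanceAs (NormedSpace 𝕜 (E a)))
          (fun b => inferInstanceAs (NormedSpace 𝕜 (G b))) i
      ∀ T : ContinuousMultilinearMap 𝕜 (Sum.elim E G) F,
        ∃ C, 0 ≤ C ∧
          AbsSummingWith 𝕜 q (Sum.elim (fun _ => 2) (fun _ => 1)) C ⇑T := by
  intro G _ _ _ T
  letI : ∀ i : Fin s ⊕ Fin k, NormedAddCommGroup (Sum.elim E G i) := fun i =>
    Sum.rec (motive := fun i => NormedAddCommGroup (Sum.elim E G i))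
      (fun a => inferInstanceAs (NormedAddCommGroup (E a)))
      (fun b => inferInstanceAs (NormedAddCommGroup (G b))) i
  letI : ∀ i : Fin s ⊕ Fin k, NormedSpace 𝕜 (Sum.elim E G i) := fun i =>
    Sum.rec (motive := fun i => NormedSpace 𝕜 (Sum.elim E G i))
      (fun a => inferInstanceAs (NormedSpace 𝕜 (E a)))
      (fun b => inferInstanceAs (NormedSpace 𝕜 (G b))) i
  have hne : Nonempty (Fin s ⊕ Fin k) := ⟨Sum.inl ⟨0, hs⟩⟩
  choose K hK0 hK using fun i => aux_layer_linfty hq2 hF (hE i)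
  refine @aux_core 𝕜 _ _ _ hne (Sum.elim E G) _ _ F _ _ q hq2 hF _
    (Sum.elim K (fun _ => 1)) ?_ ?_ T
  · rintro (i | j)
    · exact hK0 i
    · exact zero_le_one
  · rintro (i | j) m x
    · exact hK i m x
    · exact aux_layer_one F hq2 x
end

section
/- Let 1 ≤ k ≤ n and let E_1, …, E_k be infinite-dimensional 𝓛_∞-spaces; set q_1 = ⋯ = q_k = 2 and q_{k+1} = ⋯ = q_n = 1. If F is a Banach space such that for every choice of Banach spaces E_{k+1}, …, E_n, every continuous n-linear map from E_1 × ⋯ × E_n into F is absolutely (1; q_1, …, q_n)-summing, then F is finite-dimensional. -/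
open MeasureTheory

universe u v


theorem aux_exists_linInd {𝕜 F : Type*} [RCLike 𝕜] [NormedAddCommGroup F] [NormedSpace 𝕜 F]
    (hF : ¬ FiniteDimensional 𝕜 F) (n : ℕ) :
    ∃ X : Submodule 𝕜 F, FiniteDimensional 𝕜 X ∧ Module.finrank 𝕜 X = n := by
  have h : (n : Cardinal) ≤ Module.rank 𝕜 F := by
    have := hF
    rw [FiniteDimensional, ← Module.rank_lt_aleph0_iff, not_lt] at this
    exact (Cardinal.natCast_lt_aleph0 (n := n)).le.trans this
  obtain ⟨f, hf⟩ := exists_linearIndependent_of_le_rank h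
  exact ⟨Submodule.span 𝕜 (Set.range f), FiniteDimensional.span_of_finite _ (Set.finite_range f),
    by simpa using finrank_span_eq_card hf⟩

theorem aux_det {𝕜 H : Type*} [RCLike 𝕜] [NormedAddCommGroup H] [InnerProductSpace 𝕜 H]
    [FiniteDimensional 𝕜 H] (V : Submodule 𝕜 H) :
    LinearMap.det ((LinearMap.id : H →ₗ[𝕜] H) + (V.starProjection : H →ₗ[𝕜] H))
      = 2 ^ Module.finrank 𝕜 V := by
  have hc : IsCompl V Vᗮ := Submodule.isCompl_orthogonal V
  let e := Submodule.prodEquivOfIsCompl V Vᗮ hc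
  have : ((LinearMap.id : H →ₗ[𝕜] H) + (V.starProjection : H →ₗ[𝕜] H)) =
      (e : (V × Vᗮ) →ₗ[𝕜] H) ∘ₗ
        (LinearMap.prodMap ((2 : 𝕜) • LinearMap.id) LinearMap.id) ∘ₗ (e.symm : H →ₗ[𝕜] V × Vᗮ) := by
    refine LinearMap.ext fun x => ?_
    obtain ⟨⟨a, b⟩, rfl⟩ := e.surjective x
    have h1 : V.starProjection (a : H) = a := Submodule.starProjection_eq_self_iff.2 a.2
    have h2 : V.starProjection (b : H) = 0 := (Submodule.starProjection_apply_eq_zero_iff V).2 b.2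
    simp [e, h1, h2, two_smul]
    abel
  rw [this, LinearMap.det_conj, LinearMap.det_prodMap]
  simp

theorem aux_max {𝕜 X : Type*} [RCLike 𝕜] [NormedAddCommGroup X] [NormedSpace 𝕜 X]
    [FiniteDimensional 𝕜 X] {n : ℕ} (hX : Module.finrank 𝕜 X = n) :
    ∃ u : EuclideanSpace 𝕜 (Fin n) →L[𝕜] X, ‖u‖ ≤ 1 ∧
      ∀ (L : EuclideanSpace 𝕜 (Fin n) →ₗ[𝕜] EuclideanSpace 𝕜 (Fin n)) (c : ℝ), 0 < c →
        (∀ x, ‖u (L x)‖ ≤ c * ‖x‖) → ‖LinearMap.det L‖ ≤ c ^ n := by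
  have : FiniteDimensional 𝕜 (EuclideanSpace 𝕜 (Fin n) →L[𝕜] X) := inferInstance
  have : ProperSpace (EuclideanSpace 𝕜 (Fin n) →L[𝕜] X) := FiniteDimensional.proper 𝕜 _
  let b : X ≃L[𝕜] EuclideanSpace 𝕜 (Fin n) := ContinuousLinearEquiv.ofFinrankEq (by simp [hX])
  let g : (EuclideanSpace 𝕜 (Fin n) →L[𝕜] X) → ℝ := fun u =>
    ‖LinearMap.det ((b : X →ₗ[𝕜] EuclideanSpace 𝕜 (Fin n)) ∘ₗ (u : EuclideanSpace 𝕜 (Fin n) →ₗ[𝕜] X))‖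
  have hg : Continuous g := by
    have h1 : Continuous fun u : EuclideanSpace 𝕜 (Fin n) →L[𝕜] X =>
      ((b : X →L[𝕜] EuclideanSpace 𝕜 (Fin n)) ∘L u).det :=
      ContinuousLinearMap.continuous_det.comp (continuous_const.clm_comp continuous_id)
    exact h1.norm
  have hsm : ∀ (r : ℝ) u, g ((r : 𝕜) • u) = |r| ^ n * g u := by
    intro r u
    have h1 : (b : X →ₗ[𝕜] EuclideanSpace 𝕜 (Fin n)) ∘ₗ
        (((r : 𝕜) • u : EuclideanSpace 𝕜 (Fin n) →L[𝕜] X) : EuclideanSpace 𝕜 (Fin n) →ₗ[𝕜] X) =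
        (r : 𝕜) • ((b : X →ₗ[𝕜] EuclideanSpace 𝕜 (Fin n)) ∘ₗ
          (u : EuclideanSpace 𝕜 (Fin n) →ₗ[𝕜] X)) := LinearMap.comp_smul _ _ _
    simp only [g, h1, LinearMap.det_smul, norm_mul, norm_pow, RCLike.norm_ofReal]
    simp
  obtain ⟨u, hu, hmax⟩ := (isCompact_closedBall (0 : EuclideanSpace 𝕜 (Fin n) →L[𝕜] X) 1).exists_isMaxOn
    ⟨0, by simp⟩ hg.continuousOn
  have hmax' : ∀ (w : EuclideanSpace 𝕜 (Fin n) →L[𝕜] X) (c : ℝ), 0 < c → ‖w‖ ≤ c → g w ≤ c ^ n * g u := by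
    intro w c hc hw
    have h := hmax (show ((c⁻¹ : ℝ) : 𝕜) • w ∈ Metric.closedBall 0 1 by
      rw [mem_closedBall_zero_iff, norm_smul]
      simp [abs_of_pos hc]
      rw [inv_mul_le_iff₀ hc]; simpa using hw)
    have h' : g (((c⁻¹ : ℝ) : 𝕜) • w) ≤ g u := h
    rw [hsm, abs_of_pos (inv_pos.2 hc), inv_pow, inv_mul_le_iff₀ (by positivity)] at h'
    exact h'
  have hpos : 0 < g u := by
    have h0 : 0 < g (b.symm : EuclideanSpace 𝕜 (Fin n) →L[𝕜] X) := by
      have : ((b : X →ₗ[𝕜] EuclideanSpace 𝕜 (Fin n)) ∘ₗ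
          ((b.symm : EuclideanSpace 𝕜 (Fin n) →L[𝕜] X) : EuclideanSpace 𝕜 (Fin n) →ₗ[𝕜] X)) = LinearMap.id := by
        ext x; simp
      simp only [g, this]; simp
    have := hmax' (b.symm : EuclideanSpace 𝕜 (Fin n) →L[𝕜] X) (‖(b.symm : EuclideanSpace 𝕜 (Fin n) →L[𝕜] X)‖ + 1) (by positivity) (by linarith)
    by_contra h
    have h3 : (‖(b.symm : EuclideanSpace 𝕜 (Fin n) →L[𝕜] X)‖ + 1) ^ n * g u ≤ 0 :=
      mul_nonpos_of_nonneg_of_nonpos (by positivity) (not_lt.1 h)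
    linarith
  refine ⟨u, by simpa using hu, fun L c hc hL => ?_⟩
  have := hmax' (u ∘L LinearMap.toContinuousLinearMap L) c hc
    (ContinuousLinearMap.opNorm_le_bound _ hc.le hL)
  have h2 : g (u ∘L LinearMap.toContinuousLinearMap L) = ‖LinearMap.det L‖ * g u := by
    simp only [g]
    rw [mul_comm, ← norm_mul, ← map_mul]
    rfl
  rw [h2] at this
  exact le_of_mul_le_mul_right this hpos

theorem aux_DR {𝕜 F : Type*} [RCLike 𝕜] [NormedAddCommGroup F] [NormedSpace 𝕜 F]
    (hF : ¬ FiniteDimensional 𝕜 F) (k : ℕ) (hk : 1 ≤ k) :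
    ∃ y : Fin k → F, (∀ j, 2 / 5 ≤ ‖y j‖) ∧
      ∀ (a : Fin k → 𝕜) (c : ℝ), 0 ≤ c → (∀ j, ‖a j‖ ≤ c) → ‖∑ j, a j • y j‖ ≤ √k * c := by
  obtain ⟨X, hX, hr⟩ := aux_exists_linInd hF (2 * k)
  obtain ⟨u, hu1, hu⟩ := aux_max hr
  have key : ∀ j ≤ k, ∃ v : Fin j → EuclideanSpace 𝕜 (Fin (2 * k)), Orthonormal 𝕜 v ∧
      ∀ i, 2 / 5 ≤ ‖u (v i)‖ := by
    intro j
    induction j with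
    | zero => exact fun _ => ⟨Fin.elim0, by simp [Orthonormal, Pairwise], fun i => i.elim0⟩
    | succ j ih =>
      intro hj
      obtain ⟨v, hv, hv2⟩ := ih (by omega)
      let W := Submodule.span 𝕜 (Set.range v)
      have hW : Module.finrank 𝕜 W = j := by
        simpa using finrank_span_eq_card hv.linearIndependent
      have hWo : Module.finrank 𝕜 Wᗮ = 2 * k - j := by
        have := W.finrank_add_finrank_orthogonal
        simp at this
        omega
      have : ∃ x ∈ Wᗮ, ‖x‖ = 1 ∧ 2 / 5 ≤ ‖u x‖ := by
        by_contra! hcon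
        have hcon' : ∀ x ∈ Wᗮ, ‖u x‖ ≤ 2 / 5 * ‖x‖ := by
          intro x hx
          rcases eq_or_ne x 0 with rfl | h0
          · simp
          · have hpos := norm_pos_iff.2 h0
            have := hcon (((‖x‖⁻¹ : ℝ) : 𝕜) • x) (Wᗮ.smul_mem _ hx) (by
              rw [norm_smul]; simp [h0])
            rw [map_smul, norm_smul] at this
            rw [RCLike.norm_ofReal, abs_of_pos (inv_pos.2 hpos), inv_mul_lt_iff₀ hpos] at this
            linarith
        have h := hu (LinearMap.id + (Wᗮ.starProjection : _ →ₗ[𝕜] _)) (7 / 5) (by norm_num) (by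
          intro x
          have h1 : ‖u x‖ ≤ ‖x‖ := (u.le_of_opNorm_le hu1 x).trans (by simp)
          have h2 := hcon' (Wᗮ.starProjection x) (Submodule.starProjection_apply_mem _ _)
          have h3 := Submodule.norm_starProjection_apply_le Wᗮ x
          have h4 := norm_add_le (u x) (u (Wᗮ.starProjection x))
          simp only [LinearMap.add_apply, LinearMap.id_apply, map_add]
          simp only [ContinuousLinearMap.coe_coe]
          linarith)
        rw [aux_det, hWo, norm_pow] at h
        simp only [RCLike.norm_ofNat] at h
        have h5 : (2 : ℝ) ^ k ≤ 2 ^ (2 * k - j) := pow_le_pow_right₀ (by norm_num) (by omega)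
        have h6 : (7 / 5 : ℝ) ^ (2 * k) < 2 ^ k := by
          rw [pow_mul]
          exact pow_lt_pow_left₀ (by norm_num) (by norm_num) (by omega)
        linarith
      obtain ⟨x, hx, hx1, hx2⟩ := this
      refine ⟨Matrix.vecCons x v, orthonormal_vecCons_iff.2 ⟨hx1, fun i => ?_, hv⟩, fun i => ?_⟩
      · exact (Submodule.mem_orthogonal' _ _).1 hx _ (Submodule.subset_span ⟨i, rfl⟩)
      · refine Fin.cases ?_ (fun i => ?_) i
        · simpa using hx2
        · simpa using hv2 i
  obtain ⟨v, hv, hv2⟩ := key k le_rfl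
  refine ⟨fun j => (u (v j) : X), fun j => hv2 j, fun a c hc ha => ?_⟩
  have e1 : ∑ j, a j • ((u (v j) : X) : F) = ((u (∑ j, a j • v j) : X) : F) := by
    simp
  rw [e1]
  have e2 : ‖u (∑ j, a j • v j)‖ ≤ ‖∑ j, a j • v j‖ :=
    (u.le_of_opNorm_le hu1 _).trans (by simp)
  have e3 : ‖∑ j, a j • v j‖ ^ 2 ≤ k * c ^ 2 := by
    have : ‖∑ j, a j • v j‖ ^ 2 = ∑ j, ‖a j‖ ^ 2 := by
      have h := hv.inner_sum a a Finset.univ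
      rw [inner_self_eq_norm_sq_to_K] at h
      simp only [RCLike.conj_mul] at h
      exact_mod_cast h
    rw [this]
    calc ∑ j, ‖a j‖ ^ 2 ≤ ∑ j : Fin k, c ^ 2 :=
          Finset.sum_le_sum fun j _ => pow_le_pow_left₀ (norm_nonneg _) (ha j) 2
      _ = k * c ^ 2 := by simp
  refine le_trans (show _ ≤ _ from e2) ?_
  refine abs_le_of_sq_le_sq' ?_ (by positivity) |>.2
  rw [mul_pow, Real.sq_sqrt (by positivity)]
  exact e3

theorem aux_Linfty {𝕜 E : Type*} [RCLike 𝕜] [NormedAddCommGroup E] [NormedSpace 𝕜 E]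
    (hE : IsLinftySpace 𝕜 E) (hinf : ¬ FiniteDimensional 𝕜 E) :
    ∃ lam : ℝ, 0 ≤ lam ∧ ∀ d : ℕ, ∃ (e : Fin d → E) (φ : Fin d → E →L[𝕜] 𝕜),
      (∀ j, ‖φ j‖ ≤ 1) ∧ (∀ j, φ j (e j) = 1) ∧ (∀ i j, i ≠ j → φ i (e j) = 0) ∧
      ∀ ψ : E →L[𝕜] 𝕜, ‖ψ‖ ≤ 1 → ∑ j, ‖ψ (e j)‖ ≤ lam := by
  obtain ⟨lam, hlam, h⟩ := hE
  refine ⟨lam, by linarith, fun d => ?_⟩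
  obtain ⟨M, hM, hr⟩ := aux_exists_linInd hinf d
  obtain ⟨N, hMN, hN, hv⟩ := h M hM
  have hd : d ≤ Module.finrank 𝕜 N := hr ▸ Submodule.finrank_mono hMN
  generalize Module.finrank 𝕜 N = D at hv hd
  obtain ⟨v, hv⟩ := hv
  rcases Nat.eq_zero_or_pos d with rfl | hdpos
  · exact ⟨Fin.elim0, Fin.elim0, fun j => j.elim0, fun j => j.elim0, fun j => j.elim0,
      fun ψ _ => by simp; linarith⟩
  set c := ‖(v : N →L[𝕜] (Fin D → 𝕜))‖ with hc
  have hcpos : 0 < c := by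
    rw [hc, norm_pos_iff]
    intro h0
    have h1 : v (v.symm (Pi.single ⟨0, by omega⟩ 1)) = 0 := by
      have := congrArg (fun f : N →L[𝕜] (Fin D → 𝕜) => f (v.symm (Pi.single ⟨0, by omega⟩ 1))) h0
      exact this
    rw [v.apply_symm_apply] at h1
    have := congrFun h1 ⟨0, by omega⟩
    simp at this
  let f : Fin d → N →L[𝕜] 𝕜 := fun j =>
    ((c⁻¹ : ℝ) : 𝕜) • ((ContinuousLinearMap.proj (Fin.castLE hd j)) ∘L (v : N →L[𝕜] (Fin D → 𝕜)))
  have hf : ∀ j, ‖f j‖ ≤ 1 := by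
    intro j
    refine ContinuousLinearMap.opNorm_le_bound _ zero_le_one fun x => ?_
    have h1 : ‖v x (Fin.castLE hd j)‖ ≤ c * ‖x‖ :=
      (norm_le_pi_norm _ _).trans ((v : N →L[𝕜] (Fin D → 𝕜)).le_opNorm x)
    simp only [f, smul_apply, norm_smul, RCLike.norm_ofReal,
      abs_of_pos (inv_pos.2 hcpos), one_mul]
    rw [inv_mul_le_iff₀ hcpos]
    exact h1
  choose φ hφ hφn using fun j => exists_extension_norm_eq N (f j)
  let w : Fin D → N := fun j => v.symm (Pi.single j 1)
  refine ⟨fun j => (((c : ℝ) : 𝕜) • w (Fin.castLE hd j) : N), φ, fun j => (hφn j).trans_le (hf j),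
    fun j => ?_, fun i j hij => ?_, fun ψ hψ => ?_⟩
  · rw [hφ]
    have : (c : 𝕜) ≠ 0 := by exact_mod_cast hcpos.ne'
    simp [f, w, this]
  · rw [hφ]
    have : Fin.castLE hd i ≠ Fin.castLE hd j := fun h => hij (Fin.castLE_injective hd h)
    simp [f, w, this]
  · have hs : ∀ z : 𝕜, ∃ s : 𝕜, ‖s‖ ≤ 1 ∧ s * z = (‖z‖ : 𝕜) := by
      intro z
      rcases eq_or_ne z 0 with rfl | hz
      · exact ⟨0, by simp, by simp⟩
      · have hz' : (‖z‖ : 𝕜) ≠ 0 := by exact_mod_cast (norm_ne_zero_iff.2 hz)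
        refine ⟨(‖z‖ : 𝕜) / z, ?_, by field_simp⟩
        rw [norm_div]; simp [hz]
    choose s hs1 hs2 using hs
    let a : Fin D → 𝕜 := fun j => s (ψ (w j))
    have ha : ‖a‖ ≤ 1 := (pi_norm_le_iff_of_nonneg zero_le_one).2 fun j => hs1 _
    have hsum : ∑ j, a j • w j = v.symm a := by
      conv_rhs => rw [← Finset.univ_sum_single a]
      rw [map_sum]
      refine Finset.sum_congr rfl fun j _ => ?_
      rw [← map_smul]
      congr 1
      rw [← Pi.single_smul]; simp
    have h1 : ((∑ j, ‖ψ (w j)‖ : ℝ) : 𝕜) = ψ (v.symm a : N) := by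
      rw [← hsum]
      push_cast
      simp [a, hs2]
    have h2 : ∑ j, ‖ψ (w j)‖ ≤ ‖(v.symm : (Fin D → 𝕜) →L[𝕜] N)‖ := by
      have h3 : ‖ψ (v.symm a : N)‖ ≤ 1 * ‖(v.symm a : N)‖ := by
        exact ψ.le_of_opNorm_le hψ _
      have h4 : ‖v.symm a‖ ≤ ‖(v.symm : (Fin D → 𝕜) →L[𝕜] N)‖ * ‖a‖ :=
        (v.symm : (Fin D → 𝕜) →L[𝕜] N).le_opNorm a
      have h5 := mul_le_mul_of_nonneg_left ha (norm_nonneg (v.symm : (Fin D → 𝕜) →L[𝕜] N))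
      rw [← h1, RCLike.norm_ofReal, abs_of_nonneg (Finset.sum_nonneg fun _ _ => norm_nonneg _)] at h3
      have h6 : ‖(v.symm a : E)‖ = ‖v.symm a‖ := rfl
      linarith
    calc ∑ j, ‖ψ ((((c : ℝ) : 𝕜) • w (Fin.castLE hd j) : N) : E)‖
        = c * ∑ j, ‖ψ (w (Fin.castLE hd j))‖ := by
          rw [Finset.mul_sum]
          refine Finset.sum_congr rfl fun j _ => ?_
          rw [Submodule.coe_smul, map_smul, norm_smul, RCLike.norm_ofReal, abs_of_pos hcpos]
      _ ≤ c * ∑ j, ‖ψ (w j)‖ := by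
          refine mul_le_mul_of_nonneg_left ?_ hcpos.le
          rw [← Finset.sum_image (f := fun j => ‖ψ (w j)‖) (s := Finset.univ)
            (g := Fin.castLE hd) (fun a _ b _ h => Fin.castLE_injective hd h)]
          exact Finset.sum_le_sum_of_subset_of_nonneg (Finset.subset_univ _)
            fun _ _ _ => norm_nonneg _
      _ ≤ c * ‖(v.symm : (Fin D → 𝕜) →L[𝕜] N)‖ := mul_le_mul_of_nonneg_left h2 hcpos.le
      _ ≤ lam := hv

theorem aux_weak {𝕜 E : Type*} [RCLike 𝕜] [NormedAddCommGroup E] [NormedSpace 𝕜 E] {m : ℕ}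
    (x : Fin m → E) (lam q : ℝ) (hq : q = 1 ∨ q = 2)
    (h : ∀ ψ : E →L[𝕜] 𝕜, ‖ψ‖ ≤ 1 → ∑ j, ‖ψ (x j)‖ ≤ lam) :
    0 ≤ weakLpNorm 𝕜 q x ∧ weakLpNorm 𝕜 q x ≤ lam := by
  refine ⟨Real.iSup_nonneg fun φ => by positivity, ?_⟩
  have : Nonempty {φ : E →L[𝕜] 𝕜 // ‖φ‖ ≤ 1} := ⟨0, by simp⟩
  refine ciSup_le fun φ => le_trans ?_ (h φ.1 φ.2)
  rcases hq with rfl | rfl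
  · simp
  · rw [← Real.sqrt_eq_rpow]
    refine Real.sqrt_le_iff.2 ⟨by positivity, ?_⟩
    simp only [Real.rpow_ofNat]
    exact Finset.sum_sq_le_sq_sum_of_nonneg fun _ _ => norm_nonneg _

theorem aux_main {𝕜 ι : Type*} [RCLike 𝕜] [Fintype ι] [Nonempty ι] {E : ι → Type*}
    [∀ i, NormedAddCommGroup (E i)] [∀ i, NormedSpace 𝕜 (E i)]
    (hE : ∀ i, IsLinftySpace 𝕜 (E i)) (hEinf : ∀ i, ¬ FiniteDimensional 𝕜 (E i))
    {F : Type*} [NormedAddCommGroup F] [NormedSpace 𝕜 F] [CompleteSpace F]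
    (q : ι → ℝ) (hq : ∀ i, q i = 1 ∨ q i = 2)
    (H : ∀ T : ContinuousMultilinearMap 𝕜 E F, ∃ C, 0 ≤ C ∧ AbsSummingWith 𝕜 1 q C ⇑T) :
    FiniteDimensional 𝕜 F := by
  by_contra hF
  choose lam hlam e φ hφ he1 he0 hw using fun i => aux_Linfty (hE i) (hEinf i)
  let ev : ∀ x : (∀ i, E i), ContinuousMultilinearMap 𝕜 E F →L[𝕜] F := fun x =>
    ContinuousMultilinearMap.apply 𝕜 E F x
  let p : ℕ → Seminorm 𝕜 (ContinuousMultilinearMap 𝕜 E F) := fun d =>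
    ∑ j : Fin d, (normSeminorm 𝕜 F).comp (ev fun i => e i d j).toLinearMap
  have hp : ∀ d T, p d T = ∑ j : Fin d, ‖T fun i => e i d j‖ := by
    intro d T
    simp only [p, sum_apply]
    rfl
  have hcont : ∀ d, Continuous (p d) := by
    intro d
    have : (p d : ContinuousMultilinearMap 𝕜 E F → ℝ) = fun T => ∑ j : Fin d, ‖ev (fun i => e i d j) T‖ :=
      funext fun T => hp d T
    rw [this]
    fun_prop
  have hbdd : BddAbove (Set.range p) := by
    rw [Seminorm.bddAbove_range_iff]
    intro T
    obtain ⟨C, hC, hT⟩ := H T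
    refine ⟨C * ∏ i, lam i, ?_⟩
    rintro _ ⟨d, rfl⟩
    have h1 := hT d fun i j => e i d j
    simp only [Real.rpow_one, div_one] at h1
    dsimp only
    rw [hp]
    refine h1.trans (mul_le_mul_of_nonneg_left ?_ hC)
    exact Finset.prod_le_prod (fun i _ => (aux_weak _ (lam i) (q i) (hq i) (hw i d)).1)
      fun i _ => (aux_weak _ (lam i) (q i) (hq i) (hw i d)).2
  have hsup := Seminorm.continuous_iSup p hcont hbdd
  rw [← Seminorm.coe_iSup_eq hbdd] at hsup
  obtain ⟨B, hB, hBle⟩ := Seminorm.bound_of_continuous_normedSpace _ hsup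
  have hle : ∀ d T, p d T ≤ B * ‖T‖ := fun d T =>
    by
    refine le_trans ?_ (hBle T)
    rw [Seminorm.coe_iSup_eq hbdd, iSup_apply]
    exact le_ciSup (f := fun i => p i T) (Seminorm.bddAbove_range_iff.1 hbdd T) d
  have hfin : ∀ k : ℕ, 1 ≤ k → (k : ℝ) * (2 / 5) ≤ B * √k := by
    intro k hk
    obtain ⟨y, hy1, hy2⟩ := aux_DR hF k hk
    let T : ContinuousMultilinearMap 𝕜 E F := ∑ j : Fin k,
      ((ContinuousMultilinearMap.mkPiAlgebra 𝕜 ι 𝕜).compContinuousLinearMap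
        fun i => φ i k j).smulRight (y j)
    have hTa : ∀ x, T x = ∑ j, (∏ i, φ i k j (x i)) • y j := by
      intro x
      simp [T, ContinuousMultilinearMap.sum_apply]
    have hTn : ‖T‖ ≤ √k := by
      refine ContinuousMultilinearMap.opNorm_le_bound (by positivity) fun x => ?_
      rw [hTa]
      refine hy2 _ _ (by positivity) fun j => ?_
      rw [norm_prod]
      exact Finset.prod_le_prod (fun _ _ => norm_nonneg _) fun i _ =>
        ((φ i k j).le_of_opNorm_le (hφ i k j) _).trans (by simp)
    have hTe : ∀ j, T (fun i => e i k j) = y j := by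
      intro j
      rw [hTa, Finset.sum_eq_single j]
      · simp [he1]
      · intro l _ hl
        have : ∏ i, φ i k l (e i k j) = 0 :=
          Finset.prod_eq_zero (Finset.mem_univ (Classical.arbitrary ι)) (he0 _ k l j hl)
        rw [this, zero_smul]
      · simp
    have h1 := hle k T
    rw [hp] at h1
    simp only [hTe] at h1
    have h2 : (k : ℝ) * (2 / 5) ≤ ∑ j, ‖y j‖ := by
      calc (k : ℝ) * (2 / 5) = ∑ j : Fin k, (2 / 5 : ℝ) := by simp
        _ ≤ _ := Finset.sum_le_sum fun j _ => hy1 j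
    exact h2.trans (h1.trans (mul_le_mul_of_nonneg_left hTn hB.le))
  obtain ⟨k, hk⟩ := exists_nat_gt (max 1 ((5 / 2 * B) ^ 2))
  have hk1 : (1 : ℝ) < k := (le_max_left _ _).trans_lt hk
  have hk2 : (5 / 2 * B) ^ 2 < k := (le_max_right _ _).trans_lt hk
  have h := hfin k (by exact_mod_cast hk1.le)
  have hsq : 0 < √(k : ℝ) := Real.sqrt_pos.2 (by linarith)
  have hs2 : √(k : ℝ) * √k = k := Real.mul_self_sqrt (by linarith)
  have h3 : √(k : ℝ) * (2 / 5) ≤ B := by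
    refine le_of_mul_le_mul_right ?_ hsq
    nlinarith
  nlinarith
/-- Let `E₁,…,E_kv` be infinite-dimensional `𝓛_∞`-spaces. If `F` is a Banach
space such that for every choice of further Banach spaces `G₁,…,G_m`, every continuous
multilinear map from `E₁ × ⋯ × E_kv × G₁ × ⋯ × G_m` into `F` is absolutely
`(1; 2,…,2,1,…,1)`-summing, then `F` is finite-dimensional. -/
theorem finiteDimensional_of_absSumming_Linfty {𝕜 : Type v} [RCLike 𝕜] {kv m : ℕ}
    (hkv : 1 ≤ kv)
    {E : Fin kv → Type u} [∀ i, NormedAddCommGroup (E i)] [∀ i, NormedSpace 𝕜 (E i)]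
    [∀ i, CompleteSpace (E i)]
    (hE : ∀ i, IsLinftySpace 𝕜 (E i)) (hEinf : ∀ i, ¬ FiniteDimensional 𝕜 (E i))
    {F : Type*} [NormedAddCommGroup F] [NormedSpace 𝕜 F] [CompleteSpace F]
    (H : ∀ (G : Fin m → Type u) [∀ j, NormedAddCommGroup (G j)] [∀ j, NormedSpace 𝕜 (G j)]
      [∀ j, CompleteSpace (G j)],
      letI : ∀ i : Fin kv ⊕ Fin m, NormedAddCommGroup (Sum.elim E G i) := fun i =>
        Sum.rec (motive := fun i => NormedAddCommGroup (Sum.elim E G i))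
          (fun a => inferInstanceAs (NormedAddCommGroup (E a)))
          (fun b => inferInstanceAs (NormedAddCommGroup (G b))) i
      letI : ∀ i : Fin kv ⊕ Fin m, NormedSpace 𝕜 (Sum.elim E G i) := fun i =>
        Sum.rec (motive := fun i => NormedSpace 𝕜 (Sum.elim E G i))
          (fun a => inferInstanceAs (NormedSpace 𝕜 (E a)))
          (fun b => inferInstanceAs (NormedSpace 𝕜 (G b))) i
      ∀ T : ContinuousMultilinearMap 𝕜 (Sum.elim E G) F,
        ∃ C, 0 ≤ C ∧
          AbsSummingWith 𝕜 1 (Sum.elim (fun _ => 2) (fun _ => 1)) C ⇑T) :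
    FiniteDimensional 𝕜 F := by
  have : Nonempty (Fin kv ⊕ Fin m) := ⟨Sum.inl ⟨0, hkv⟩⟩
  refine @aux_main 𝕜 (Fin kv ⊕ Fin m) _ _ _ (Sum.elim E fun _ => E ⟨0, hkv⟩) (_) (_) ?_ ?_ F _ _ _
    (Sum.elim (fun _ => 2) (fun _ => 1)) ?_ (H fun _ => E ⟨0, hkv⟩)
  · rintro (a | b)
    · exact hE a
    · exact hE ⟨0, hkv⟩
  · rintro (a | b)
    · exact hEinf a
    · exact hEinf ⟨0, hkv⟩
  · rintro (a | b)
    · exact Or.inr rfl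
    · exact Or.inl rfl
end
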